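/- The limit as n → ∞ of S₃(n)^{1/π(n)} exists and equals β; that is, S₃(n) = (β + o(1))^{π(n)}. -/

import Mathlib

open scoped Classical

/-- A finite set of naturals is multiplicative `k`-Sidon if it contains no `2k`
distinct elements `a₁, …, aₖ, b₁, …, bₖ` with `a₁⋯aₖ = b₁⋯bₖ`. -/
def MulKSidon (k : ℕ) (A : Finset ℕ) : Prop :=
  ¬ ∃ a b : Fin k → ℕ, (∀ i, a i ∈ A) ∧ (∀ i, b i ∈ A) ∧
    Function.Injective (Sum.elim a b) ∧ (∏ i, a i) = (∏ i, b i)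

/-- `Sk k n`: the number of multiplicative `k`-Sidon subsets of `{1, …, n}`. -/
noncomputable def Sk (k n : ℕ) : ℕ :=
  ((Finset.Icc 1 n).powerset.filter (fun A => MulKSidon k A)).card

/-- `eOn G m`: the number of edges of the induced subgraph of `G` on `{1, …, m}`. -/
noncomputable def eOn (G : SimpleGraph ℕ) (m : ℕ) : ℕ :=
  (((Finset.Icc 1 m) ×ˢ (Finset.Icc 1 m)).filter
    (fun p => p.1 < p.2 ∧ G.Adj p.1 p.2)).card

/-- A graph on the positive integers is product-free if no three (not necessarily
distinct) edges `a₁b₁, a₂b₂, a₃b₃` satisfy `(a₁/b₁)·(a₂/b₂) = a₃/b₃` in `ℚ`. -/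
def ProductFree (G : SimpleGraph ℕ) : Prop :=
  (∀ a b : ℕ, G.Adj a b → 0 < a) ∧
  ∀ a₁ b₁ a₂ b₂ a₃ b₃ : ℕ, G.Adj a₁ b₁ → G.Adj a₂ b₂ → G.Adj a₃ b₃ →
    ((a₁ : ℚ)/b₁) * ((a₂ : ℚ)/b₂) ≠ (a₃ : ℚ)/b₃

/-- The value `∏_{m=1}^∞ (e(G_m) + m + 1)^{1/(m²+m)}` associated to a graph `G`. -/
noncomputable def gProd (G : SimpleGraph ℕ) : ℝ :=
  ∏' m : ℕ, ((eOn G (m + 1) : ℝ) + (m + 1) + 1) ^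
    ((1 : ℝ) / (((m : ℝ) + 1) ^ 2 + ((m : ℝ) + 1)))

/-- `β`: the supremum over all product-free graphs `G` of
`∏_{m=1}^∞ (e(G_m) + m + 1)^{1/(m²+m)}`. -/
noncomputable def beta : ℝ :=
  sSup {x : ℝ | ∃ G : SimpleGraph ℕ, ProductFree G ∧ x = gProd G}

section
open MeasureTheory Filter Topology Set

namespace PNT
noncomputable section

/-- normalized error -/
def hh (u : ℝ) : ℝ := Chebyshev.psi (Real.exp u) * Real.exp (-u) - 1

lemma hh_meas : Measurable hh := by
  unfold hh
  have h1 : Measurable Chebyshev.psi := Chebyshev.psi_mono.measurable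
  have h2 : Measurable (fun u : ℝ => Chebyshev.psi (Real.exp u)) := h1.comp Real.measurable_exp
  exact (h2.mul (by fun_prop)).sub_const 1

lemma hh_bdd (u : ℝ) : |hh u| ≤ Real.log 4 + 5 := by
  have h1 := Chebyshev.psi_le_const_mul_self (Real.exp_pos u).le
  have h0 := Chebyshev.psi_nonneg (Real.exp u)
  have h2 : Chebyshev.psi (Real.exp u) * Real.exp (-u) ≤ Real.log 4 + 4 := by
    rw [Real.exp_neg, ← div_eq_mul_inv, div_le_iff₀ (Real.exp_pos u)]; exact h1
  have h3 : 0 ≤ Chebyshev.psi (Real.exp u) * Real.exp (-u) := by positivity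
  have h4 : 0 ≤ Real.log 4 := Real.log_nonneg (by norm_num)
  rw [abs_le]; unfold hh; constructor <;> linarith

lemma intOn_bdd_exp {h : ℝ → ℝ} {C : ℝ} (hm : Measurable h) (hb : ∀ u, |h u| ≤ C)
    {z : ℂ} (hz : 0 < z.re) :
    IntegrableOn (fun u : ℝ => (h u : ℂ) * Complex.exp (-z * u)) (Ioi 0) := by
  have h1 : IntegrableOn (fun u : ℝ => Complex.exp (-z * u)) (Ioi 0) :=
    integrableOn_exp_mul_complex_Ioi (by simpa using hz) 0
  refine Integrable.bdd_mul h1 (c := C) ?_ ?_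
  · exact (Complex.measurable_ofReal.comp hm).aestronglyMeasurable
  · exact Eventually.of_forall fun u => by simpa using hb u

lemma vm_series : ∃ H : ℂ → ℂ, ContinuousOn H {s | 1 ≤ s.re} ∧ ∀ s : ℂ, 1 < s.re →
    LSeries (fun n => (ArithmeticFunction.vonMangoldt n : ℂ)) s = H s + 1 / (s - 1) := by
  refine ⟨ArithmeticFunction.vonMangoldt.LFunctionResidueClassAux (q := 1) 1,
    ArithmeticFunction.vonMangoldt.continuousOn_LFunctionResidueClassAux 1, fun s hs => ?_⟩
  rw [ArithmeticFunction.vonMangoldt.eqOn_LFunctionResidueClassAux (q := 1) (a := 1) isUnit_one hs]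
  have : ArithmeticFunction.vonMangoldt.residueClass (1 : ZMod 1) = fun n => ArithmeticFunction.vonMangoldt n := by
    funext n
    simp [ArithmeticFunction.vonMangoldt.residueClass, Subsingleton.elim _ (1 : ZMod 1)]
  simp [this]

lemma vm_integral {s : ℂ} (hs : 1 < s.re) :
    LSeries (fun n => (ArithmeticFunction.vonMangoldt n : ℂ)) s =
      s * ∫ u in Ioi (0:ℝ), (Chebyshev.psi (Real.exp u) : ℂ) * Complex.exp (-s * u) := by
  rw [LSeries_eq_mul_integral_of_nonneg (fun n => ArithmeticFunction.vonMangoldt n) zero_le_one hs ?_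
    (fun n => ArithmeticFunction.vonMangoldt_nonneg)]
  · congr 1
    have := integral_comp_exp_Ioi (fun t : ℝ => (∑ k ∈ Finset.Icc 1 ⌊t⌋₊, (ArithmeticFunction.vonMangoldt k : ℂ)) * (t : ℂ) ^ (-(s + 1))) 0
    rw [Real.exp_zero] at this
    rw [← this]
    refine setIntegral_congr_fun measurableSet_Ioi fun u _ => ?_
    have e1 : (∑ k ∈ Finset.Icc 1 ⌊Real.exp u⌋₊, (ArithmeticFunction.vonMangoldt k : ℂ)) = (Chebyshev.psi (Real.exp u) : ℂ) := by
      unfold Chebyshev.psi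
      push_cast
      rfl
    simp only [e1]
    rw [Complex.ofReal_exp]
    rw [Complex.cpow_def_of_ne_zero (Complex.exp_ne_zero _), ← Complex.ofReal_exp, ← Complex.ofReal_log (Real.exp_pos u).le,
      Real.log_exp, Complex.real_smul, Complex.ofReal_exp, mul_left_comm, ← Complex.exp_add]
    congr 2; ring
  · refine Asymptotics.IsBigO.of_bound (Real.log 4 + 4) (Eventually.of_forall fun n => ?_)
    have h1 := Chebyshev.psi_le_const_mul_self (x := n) (by positivity)
    have h0 := Chebyshev.psi_nonneg (n : ℝ)
    have : ∑ k ∈ Finset.Icc 1 n, ArithmeticFunction.vonMangoldt k = Chebyshev.psi n := by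
      unfold Chebyshev.psi; simp; rfl
    rw [this, Real.norm_eq_abs, abs_of_nonneg h0]
    simpa using h1

lemma hh_laplace : ∃ G : ℂ → ℂ, ContinuousOn G {z | 0 ≤ z.re} ∧ ∀ z : ℂ, 0 < z.re →
    ∫ u in Ioi (0:ℝ), (hh u : ℂ) * Complex.exp (-z * u) = G z := by
  obtain ⟨H, hc, hH⟩ := vm_series
  refine ⟨fun z => (H (1 + z) - 1) / (1 + z), ?_, fun z hz => ?_⟩
  · refine ContinuousOn.div ((hc.comp (by fun_prop) fun z hz => ?_).sub continuousOn_const) (by fun_prop) fun z hz h => ?_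
    · simp only [mem_ofPred_eq] at hz ⊢
      simpa using hz
    · have := congrArg Complex.re h
      simp only [mem_ofPred_eq] at hz
      simp at this; linarith
  · have hs : 1 < (1 + z).re := by simpa using hz
    have e := (hH _ hs).symm.trans (vm_integral hs)
    have z0 : z ≠ 0 := by rintro rfl; simp at hz
    have z1 : 1 + z ≠ 0 := by intro h; rw [h] at hs; simp at hs; linarith
    have i1 := intOn_bdd_exp hh_meas hh_bdd hz
    have i2 : IntegrableOn (fun u : ℝ => Complex.exp (-z * u)) (Ioi 0) :=
      integrableOn_exp_mul_complex_Ioi (by simpa using hz) 0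
    have e2 : ∫ u in Ioi (0:ℝ), (Chebyshev.psi (Real.exp u) : ℂ) * Complex.exp (-(1+z) * u)
        = (∫ u in Ioi (0:ℝ), (hh u : ℂ) * Complex.exp (-z * u)) + 1 / z := by
      have e3 : ∫ u in Ioi (0:ℝ), Complex.exp (-z * u) = 1 / z := by
        rw [integral_exp_mul_complex_Ioi (by simpa using hz)]; simp
      rw [← e3, ← integral_add i1 i2]
      refine setIntegral_congr_fun measurableSet_Ioi fun u _ => ?_
      simp only [hh]
      push_cast
      have : Complex.exp (-(1+z) * u) = Complex.exp (-u) * Complex.exp (-z*u) := by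
        rw [← Complex.exp_add]; congr 1; ring
      rw [this]; ring
    rw [e2] at e
    have : (1 + z) * ∫ u in Ioi (0:ℝ), (hh u : ℂ) * Complex.exp (-z * u) = H (1+z) - 1 := by
      have h3 : 1 + z - 1 = z := by ring
      rw [h3, mul_add] at e
      have h4 : (1+z) * (1/z) = 1/z + 1 := by field_simp
      rw [h4] at e
      linear_combination -e
    rw [eq_div_iff z1, ← this]; ring
end
end PNT

end

section
open MeasureTheory Filter Topology Set

namespace PNT
noncomputable section

lemma kernel_step1 {h : ℝ → ℝ} {C : ℝ} (hm : Measurable h) (hb : ∀ u, |h u| ≤ C) {G : ℂ → ℂ}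
    (hL : ∀ z : ℂ, 0 < z.re → ∫ u in Ioi (0:ℝ), (h u : ℂ) * Complex.exp (-z * u) = G z)
    {w : ℝ → ℝ} (hw : Continuous w) (hws : HasCompactSupport w) {K : ℝ → ℝ}
    (hKw : ∀ v : ℝ, (K v : ℂ) = ∫ t : ℝ, (w t : ℂ) * Complex.exp (Complex.I * t * v))
    {ε : ℝ} (hε : 0 < ε) (y : ℝ) :
    ∫ u in Ioi (0:ℝ), (h u : ℂ) * Complex.exp (-(ε:ℂ) * u) * (K (y - u) : ℂ) =
      ∫ t : ℝ, (w t : ℂ) * Complex.exp (Complex.I * t * y) * G (ε + Complex.I * t) := by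
  have i1 : Integrable (fun u : ℝ => (h u : ℂ) * Complex.exp (-(ε:ℂ) * u)) (volume.restrict (Ioi 0)) :=
    intOn_bdd_exp hm hb (z := ε) (by simpa using hε)
  have i2 : Integrable (fun t : ℝ => (w t : ℂ)) := (hw.integrable_of_hasCompactSupport hws).ofReal
  have i3 : Integrable (fun p : ℝ × ℝ => (w p.1 : ℂ) * ((h p.2 : ℂ) * Complex.exp (-(ε:ℂ) * p.2)))
      (volume.prod (volume.restrict (Ioi 0))) := i2.mul_prod i1
  have i4 : Integrable (Function.uncurry fun (t u : ℝ) => Complex.exp (Complex.I * t * ((y - u : ℝ) : ℂ)) *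
      ((w t : ℂ) * ((h u : ℂ) * Complex.exp (-(ε:ℂ) * u))))
      (volume.prod (volume.restrict (Ioi 0))) := by
    refine Integrable.bdd_mul (c := 1) i3 ?_ (Eventually.of_forall fun p => ?_)
    · exact (by fun_prop : Continuous fun p : ℝ × ℝ => Complex.exp (Complex.I * p.1 * ((y - p.2 : ℝ) : ℂ))).aestronglyMeasurable
    · rw [mul_assoc, ← Complex.ofReal_mul, mul_comm, Complex.norm_exp_ofReal_mul_I]
  have sw := integral_integral_swap i4
  calc _ = ∫ u in Ioi (0:ℝ), ∫ t : ℝ, Complex.exp (Complex.I * t * ((y - u : ℝ) : ℂ)) *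
      ((w t : ℂ) * ((h u : ℂ) * Complex.exp (-(ε:ℂ) * u))) := by
        refine setIntegral_congr_fun measurableSet_Ioi fun u _ => ?_
        beta_reduce
        rw [hKw, ← integral_const_mul]
        congr 1; funext t; ring
    _ = _ := sw.symm
    _ = _ := by
        congr 1; funext t
        rw [← hL _ (by simpa using hε), ← integral_const_mul]
        congr 1; funext u
        have : Complex.exp (-(ε + Complex.I * t) * u) = Complex.exp (-(ε:ℂ) * u) * Complex.exp (-(Complex.I * t * u)) := by
          rw [← Complex.exp_add]; congr 1; ring
        have h2 : Complex.exp (Complex.I * t * ((y - u : ℝ) : ℂ)) = Complex.exp (Complex.I * t * y) * Complex.exp (-(Complex.I * t * u)) := by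
          rw [← Complex.exp_add]; congr 1; push_cast; ring
        rw [this, h2]; ring

lemma kernel_step2 {h : ℝ → ℝ} {C : ℝ} (hm : Measurable h) (hb : ∀ u, |h u| ≤ C) {G : ℂ → ℂ}
    (hG : ContinuousOn G {z | 0 ≤ z.re})
    (hL : ∀ z : ℂ, 0 < z.re → ∫ u in Ioi (0:ℝ), (h u : ℂ) * Complex.exp (-z * u) = G z)
    {w : ℝ → ℝ} (hw : Continuous w) (hws : HasCompactSupport w) {K : ℝ → ℝ} (hK : Integrable K)
    (hKw : ∀ v : ℝ, (K v : ℂ) = ∫ t : ℝ, (w t : ℂ) * Complex.exp (Complex.I * t * v)) (y : ℝ) :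
    ((∫ u in Ioi (0:ℝ), h u * K (y - u) : ℝ) : ℂ) =
      ∫ t : ℝ, (w t : ℂ) * Complex.exp (Complex.I * t * y) * G (Complex.I * t) := by
  have hKy : Integrable (fun u => K (y - u)) := hK.comp_sub_left y
  have l1 : Tendsto (fun ε : ℝ => ∫ u in Ioi (0:ℝ), (h u : ℂ) * Complex.exp (-(ε:ℂ) * u) * (K (y - u) : ℂ))
      (𝓝[>] 0) (𝓝 (∫ u in Ioi (0:ℝ), (h u : ℂ) * (K (y - u) : ℂ))) := by
    refine tendsto_integral_filter_of_dominated_convergence (fun u => C * |K (y - u)|) ?_ ?_ ?_ ?_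
    · refine Eventually.of_forall fun ε => ?_
      refine AEStronglyMeasurable.mul (AEStronglyMeasurable.mul ?_ ?_) ?_
      · exact (Complex.measurable_ofReal.comp hm).aestronglyMeasurable
      · exact (by fun_prop : Continuous fun u : ℝ => Complex.exp (-(ε:ℂ) * u)).aestronglyMeasurable
      · exact hKy.ofReal.aestronglyMeasurable.restrict
    · filter_upwards [self_mem_nhdsWithin] with ε hε
      filter_upwards [ae_restrict_mem measurableSet_Ioi] with u hu
      rw [norm_mul, norm_mul, Complex.norm_real, Complex.norm_real, Complex.norm_exp, Real.norm_eq_abs, Real.norm_eq_abs]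
      have : Real.exp ((-(ε:ℂ) * u).re) ≤ 1 := by
        rw [Real.exp_le_one_iff]
        simp only [mem_Ioi] at hε hu
        simp; positivity
      have h1 := hb u
      have h2 := abs_nonneg (h u)
      refine mul_le_mul_of_nonneg_right ?_ (abs_nonneg _)
      nlinarith [Real.exp_pos ((-(ε:ℂ) * u).re)]
    · exact (hKy.abs.const_mul C).restrict
    · refine Eventually.of_forall fun u => ?_
      have : Continuous fun ε : ℝ => (h u : ℂ) * Complex.exp (-(ε:ℂ) * u) * (K (y - u) : ℂ) := by fun_prop
      have := (this.tendsto 0).mono_left (nhdsWithin_le_nhds (s := Ioi 0))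
      simpa using this
  have hcomp : IsCompact ((fun p : ℝ × ℝ => (p.1 : ℂ) + Complex.I * p.2) '' (Icc 0 1 ×ˢ tsupport w)) :=
    (isCompact_Icc.prod hws.isCompact).image (by fun_prop)
  obtain ⟨D, hD⟩ := hcomp.exists_bound_of_continuousOn (hG.mono (by
    rintro _ ⟨p, hp, rfl⟩
    have := hp.1.1
    simpa using this))
  have hGt : ∀ t : ℝ, Tendsto (fun ε : ℝ => G (ε + Complex.I * t)) (𝓝[>] 0) (𝓝 (G (Complex.I * t))) := by
    intro t
    have c := hG (Complex.I * t) (by simp)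
    refine c.tendsto.comp (tendsto_nhdsWithin_iff.2 ⟨?_, ?_⟩)
    · have : Continuous fun ε : ℝ => (ε : ℂ) + Complex.I * t := by fun_prop
      have := (this.tendsto 0).mono_left (nhdsWithin_le_nhds (s := Ioi 0))
      simpa using this
    · filter_upwards [self_mem_nhdsWithin] with ε hε
      simp only [mem_Ioi] at hε
      simpa using hε.le
  have l2 : Tendsto (fun ε : ℝ => ∫ t : ℝ, (w t : ℂ) * Complex.exp (Complex.I * t * y) * G (ε + Complex.I * t))
      (𝓝[>] 0) (𝓝 (∫ t : ℝ, (w t : ℂ) * Complex.exp (Complex.I * t * y) * G (Complex.I * t))) := by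
    refine tendsto_integral_filter_of_dominated_convergence (fun t => D * |w t|) ?_ ?_ ?_ ?_
    · filter_upwards [self_mem_nhdsWithin] with ε hε
      simp only [mem_Ioi] at hε
      have cG : Continuous fun t : ℝ => G (ε + Complex.I * t) :=
        hG.comp_continuous (by fun_prop) fun t => by simpa using hε.le
      exact ((by fun_prop : Continuous fun t : ℝ => (w t : ℂ) * Complex.exp (Complex.I * t * y)).mul cG).aestronglyMeasurable
    · filter_upwards [Ioc_mem_nhdsGT (zero_lt_one : (0:ℝ) < 1)] with ε hε
      refine Eventually.of_forall fun t => ?_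
      have e1 : ‖Complex.exp (Complex.I * t * y)‖ = 1 := by
        rw [mul_assoc, ← Complex.ofReal_mul, mul_comm, Complex.norm_exp_ofReal_mul_I]
      rw [norm_mul, norm_mul, e1, Complex.norm_real, Real.norm_eq_abs, mul_one, mul_comm]
      by_cases ht : w t = 0
      · simp [ht]
      · refine mul_le_mul_of_nonneg_right (hD _ ⟨(ε, t), ⟨⟨hε.1.le, hε.2⟩, subset_tsupport _ ht⟩, rfl⟩) (abs_nonneg _)
    · exact (hw.integrable_of_hasCompactSupport hws).abs.const_mul D
    · exact Eventually.of_forall fun t => (hGt t).const_mul _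
  have l3 := tendsto_nhds_unique (l1.congr' (by
    filter_upwards [self_mem_nhdsWithin] with ε hε
    exact kernel_step1 hm hb hL hw hws hKw hε y)) l2
  rw [← l3, ← integral_complex_ofReal]
  simp

lemma kernel_tendsto {h : ℝ → ℝ} {C : ℝ} (hm : Measurable h) (hb : ∀ u, |h u| ≤ C) {G : ℂ → ℂ}
    (hG : ContinuousOn G {z | 0 ≤ z.re})
    (hL : ∀ z : ℂ, 0 < z.re → ∫ u in Ioi (0:ℝ), (h u : ℂ) * Complex.exp (-z * u) = G z)
    {w : ℝ → ℝ} (hw : Continuous w) (hws : HasCompactSupport w) {K : ℝ → ℝ} (hK : Integrable K)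
    (hKw : ∀ v : ℝ, (K v : ℂ) = ∫ t : ℝ, (w t : ℂ) * Complex.exp (Complex.I * t * v)) :
    Tendsto (fun y : ℝ => ∫ u in Ioi (0:ℝ), h u * K (y - u)) atTop (𝓝 0) := by
  have rl := Real.tendsto_integral_exp_smul_cocompact (fun t : ℝ => (w t : ℂ) * G (Complex.I * t))
  have t1 : Tendsto (fun y : ℝ => -(y / (2 * Real.pi))) atTop (cocompact ℝ) := by
    refine Tendsto.mono_right ?_ atBot_le_cocompact
    exact tendsto_neg_atTop_atBot.comp (tendsto_id.atTop_div_const (by positivity))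
  have t2 := rl.comp t1
  have t3 : Tendsto (fun y : ℝ => ((∫ u in Ioi (0:ℝ), h u * K (y - u) : ℝ) : ℂ)) atTop (𝓝 0) := by
    refine t2.congr fun y => ?_
    rw [kernel_step2 hm hb hG hL hw hws hK hKw]
    simp only [Function.comp]
    congr 1; funext t
    rw [Circle.smul_def, Real.fourierChar_apply, smul_eq_mul]
    have : Complex.exp (((2 * Real.pi * -(t * -(y / (2 * Real.pi))) : ℝ) : ℂ) * Complex.I) = Complex.exp (Complex.I * t * y) := by
      congr 1
      have : (2 * Real.pi * -(t * -(y / (2 * Real.pi))) : ℝ) = t * y := by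
        field_simp
      rw [this]; push_cast; ring
    rw [this]; ring
  have := (Complex.continuous_re.tendsto 0).comp t3
  simpa [Function.comp_def] using this
end
end PNT

end

section
open MeasureTheory Filter Topology Set

namespace PNT
noncomputable section

def w1 (t : ℝ) : ℝ := max 0 (1 - |t|)

lemma w1_cont : Continuous w1 := by unfold w1; fun_prop

lemma w1_supp : HasCompactSupport w1 := by
  refine HasCompactSupport.intro (isCompact_Icc (a := (-1:ℝ)) (b := 1)) fun x hx => ?_
  unfold w1
  have : 1 < |x| := by
    by_contra h
    exact hx (abs_le.1 (not_lt.1 h))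
  exact max_eq_left (by linarith)

def K1 (v : ℝ) : ℝ := if v = 0 then ∫ t, w1 t else 2 * (1 - Real.cos v) / v ^ 2

lemma K1_nonneg (v : ℝ) : 0 ≤ K1 v := by
  unfold K1
  split_ifs
  · exact integral_nonneg fun t => le_max_left _ _
  · have := Real.cos_le_one v
    have : 0 ≤ 1 - Real.cos v := by linarith
    positivity

lemma K1_meas : Measurable K1 := by
  unfold K1
  refine Measurable.ite (measurableSet_eq) measurable_const ?_
  exact (((Real.measurable_cos.const_sub 1).const_mul 2).div (measurable_id.pow_const 2))

lemma K1_int : Integrable K1 := by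
  refine Integrable.mono' (integrable_inv_one_add_sq.const_mul 5) K1_meas.aestronglyMeasurable ?_
  have : ∀ᵐ v : ℝ, v ≠ 0 := by simp [ae_iff]
  filter_upwards [this] with v hv
  rw [Real.norm_eq_abs, abs_of_nonneg (K1_nonneg v)]
  unfold K1
  rw [if_neg hv, ← div_eq_mul_inv, div_le_div_iff₀ (by positivity) (by positivity)]
  have h1 := Real.one_sub_sq_div_two_le_cos (x := v)
  have h2 := Real.neg_one_le_cos v
  nlinarith [sq_nonneg v]

lemma K1_mass : 0 < ∫ v, K1 v := by
  rw [integral_pos_iff_support_of_nonneg K1_nonneg K1_int]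
  refine lt_of_lt_of_le ?_ (measure_mono (s := Ioo (0:ℝ) 1) fun v hv => ?_)
  · simp
  · have h1 : Real.cos v < 1 := by
      have := Real.cos_lt_cos_of_nonneg_of_le_pi le_rfl (by linarith [hv.2, Real.pi_gt_three]) hv.1
      simpa using this
    have h0 := hv.1
    simp only [Function.mem_support, K1, if_neg h0.ne']
    have : 0 < 1 - Real.cos v := by linarith
    positivity

lemma K1_fourier (v : ℝ) : (K1 v : ℂ) = ∫ t : ℝ, (w1 t : ℂ) * Complex.exp (Complex.I * t * v) := by
  by_cases hv : v = 0
  · subst hv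
    simp [K1, integral_complex_ofReal]
  · have e1 : ∫ t : ℝ, (w1 t : ℂ) * Complex.exp (Complex.I * t * v) =
        ∫ t in (-1:ℝ)..1, (w1 t : ℂ) * Complex.exp (Complex.I * t * v) := by
      rw [intervalIntegral.integral_of_le (by norm_num), setIntegral_eq_integral_of_forall_compl_eq_zero]
      intro t ht
      have : w1 t = 0 := by
        unfold w1
        apply max_eq_left
        by_contra h
        have h2 : |t| < 1 := by linarith
        have := abs_lt.1 h2
        exact ht ⟨this.1, this.2.le⟩
      simp [this]
    have hc : Continuous fun t : ℝ => (w1 t : ℂ) * Complex.exp (Complex.I * t * v) := by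
      have := w1_cont
      fun_prop
    set c : ℂ := Complex.I * v with hcdef
    have c0 : c ≠ 0 := by simp [hcdef, hv]
    have e2 : ∫ t in (0:ℝ)..1, (w1 t : ℂ) * Complex.exp (Complex.I * t * v) = Complex.exp c / c^2 - 1 / c - 1 / c^2 := by
      have : ∀ t ∈ uIcc (0:ℝ) 1, HasDerivAt (fun t : ℝ => (1 - (t:ℂ)) * Complex.exp (c * t) / c + Complex.exp (c * t) / c^2)
          ((w1 t : ℂ) * Complex.exp (Complex.I * t * v)) t := by
        intro t ht
        rw [uIcc_of_le zero_le_one] at ht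
        have hw : w1 t = 1 - t := by
          unfold w1; rw [abs_of_nonneg ht.1]; exact max_eq_right (by linarith [ht.2])
        have d0 : HasDerivAt (fun t : ℝ => (t : ℂ)) 1 t := Complex.ofRealCLM.hasDerivAt
        have d1 : HasDerivAt (fun t : ℝ => Complex.exp (c * t)) (Complex.exp (c * t) * (c * 1)) t := (d0.const_mul c).cexp
        have d2 := (((d0.const_sub 1).mul d1).div_const c).add (d1.div_const (c^2))
        refine HasDerivAt.congr_deriv (f := fun t : ℝ => _) d2 ?_
        rw [hw, show Complex.I * t * v = c * t by rw [hcdef]; ring]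
        push_cast; field_simp; ring
      rw [intervalIntegral.integral_eq_sub_of_hasDerivAt this (hc.intervalIntegrable _ _)]
      simp; ring
    have e3 : ∫ t in (-1:ℝ)..0, (w1 t : ℂ) * Complex.exp (Complex.I * t * v) = Complex.exp (-c) / c^2 + 1 / c - 1 / c^2 := by
      have : ∀ t ∈ uIcc (-1:ℝ) 0, HasDerivAt (fun t : ℝ => (1 + (t:ℂ)) * Complex.exp (c * t) / c - Complex.exp (c * t) / c^2)
          ((w1 t : ℂ) * Complex.exp (Complex.I * t * v)) t := by
        intro t ht
        rw [uIcc_of_le (by norm_num)] at ht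
        have hw : w1 t = 1 + t := by
          unfold w1; rw [abs_of_nonpos ht.2, max_eq_right (by linarith [ht.1])]; ring
        have d0 : HasDerivAt (fun t : ℝ => (t : ℂ)) 1 t := Complex.ofRealCLM.hasDerivAt
        have d1 : HasDerivAt (fun t : ℝ => Complex.exp (c * t)) (Complex.exp (c * t) * (c * 1)) t := (d0.const_mul c).cexp
        have d2 := (((d0.const_add 1).mul d1).div_const c).sub (d1.div_const (c^2))
        refine HasDerivAt.congr_deriv (f := fun t : ℝ => _) d2 ?_
        rw [hw, show Complex.I * t * v = c * t by rw [hcdef]; ring]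
        push_cast; field_simp; ring
      rw [intervalIntegral.integral_eq_sub_of_hasDerivAt this (hc.intervalIntegrable _ _)]
      simp; ring
    rw [e1, ← intervalIntegral.integral_add_adjacent_intervals (hc.intervalIntegrable (-1) 0) (hc.intervalIntegrable 0 1), e2, e3]
    have hcos : Complex.exp c + Complex.exp (-c) = 2 * (Real.cos v : ℂ) := by
      rw [Complex.ofReal_cos, Complex.two_cos, hcdef]
      congr 2 <;> ring
    have hc2 : c ^ 2 = - (v:ℂ)^2 := by rw [hcdef, mul_pow, Complex.I_sq]; ring
    have hv' : (v : ℂ) ≠ 0 := by exact_mod_cast hv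
    have : Complex.exp (-c) / c^2 + 1 / c - 1 / c^2 + (Complex.exp c / c^2 - 1 / c - 1 / c^2) = (Complex.exp c + Complex.exp (-c) - 2) / c^2 := by ring
    rw [this, hcos, hc2]
    simp only [K1, if_neg hv]
    push_cast
    field_simp
    ring

/-- scaled kernels -/
def Kl (l v : ℝ) : ℝ := l * K1 (l * v)

lemma Kl_int {l : ℝ} (hl : 0 < l) : Integrable (Kl l) :=
  (K1_int.comp_mul_left' hl.ne').const_mul l

lemma Kl_mass {l : ℝ} (hl : 0 < l) : ∫ v, Kl l v = ∫ v, K1 v := by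
  unfold Kl
  rw [integral_const_mul, Measure.integral_comp_mul_left, abs_of_pos (by positivity), smul_eq_mul]
  field_simp

lemma Kl_tendsto {h : ℝ → ℝ} {C : ℝ} (hm : Measurable h) (hb : ∀ u, |h u| ≤ C) {G : ℂ → ℂ}
    (hG : ContinuousOn G {z | 0 ≤ z.re})
    (hL : ∀ z : ℂ, 0 < z.re → ∫ u in Ioi (0:ℝ), (h u : ℂ) * Complex.exp (-z * u) = G z)
    {l : ℝ} (hl : 0 < l) :
    Tendsto (fun y : ℝ => ∫ u in Ioi (0:ℝ), h u * Kl l (y - u)) atTop (𝓝 0) := by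
  refine kernel_tendsto hm hb hG hL (w := fun t => w1 (t / l)) (w1_cont.comp (by fun_prop)) ?_ (Kl_int hl) ?_
  · have := w1_supp.comp_homeomorph (Homeomorph.mulRight₀ (l⁻¹) (by positivity))
    simpa [Function.comp_def, div_eq_mul_inv] using this
  · intro v
    have := Measure.integral_comp_div (fun t : ℝ => (w1 t : ℂ) * Complex.exp (Complex.I * t * ((l * v : ℝ) : ℂ))) l
    rw [← K1_fourier, abs_of_pos hl] at this
    unfold Kl
    rw [Complex.ofReal_mul, ← Complex.real_smul, ← this]
    congr 1; funext t
    have hl' : (l : ℂ) ≠ 0 := by exact_mod_cast hl.ne'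
    congr 2
    push_cast
    field_simp

lemma core {h : ℝ → ℝ} {C : ℝ} (hm : Measurable h) (hb : ∀ u, |h u| ≤ C)
    (hT : ∀ l : ℝ, 0 < l → Tendsto (fun y : ℝ => ∫ u in Ioi (0:ℝ), h u * Kl l (y - u)) atTop (𝓝 0))
    {η δ : ℝ} (hη : 0 < η) (hδ : 0 < δ) : ∀ᶠ y in atTop, ∃ u ∈ Icc (y - δ) (y + δ), h u < η := by
  set κ := ∫ v, K1 v with hκ
  have hκ0 : 0 < κ := K1_mass
  have hA : Tendsto (fun l : ℝ => ∫ v in (-δ)..δ, Kl l v) atTop (𝓝 κ) := by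
    have h1 : Tendsto (fun l : ℝ => ∫ v in (l * -δ)..(l * δ), K1 v) atTop (𝓝 κ) := by
      refine intervalIntegral_tendsto_integral K1_int ?_ ?_
      · exact tendsto_id.atTop_mul_const_of_neg (by linarith)
      · exact tendsto_id.atTop_mul_const hδ
    refine h1.congr' ?_
    filter_upwards [eventually_gt_atTop 0] with l hl
    unfold Kl
    rw [intervalIntegral.integral_const_mul, intervalIntegral.integral_comp_mul_left _ hl.ne', smul_eq_mul]
    field_simp
  have hA2 : Tendsto (fun l : ℝ => (η + C) * (∫ v in (-δ)..δ, Kl l v) - C * κ) atTop (𝓝 ((η + C) * κ - C * κ)) :=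
    (hA.const_mul _).sub_const _
  have hpos : 0 < (η + C) * κ - C * κ := by nlinarith
  obtain ⟨l, hl1, hl⟩ := ((hA2.eventually (lt_mem_nhds hpos)).and (eventually_gt_atTop 0)).exists
  set a := ∫ v in (-δ)..δ, Kl l v with ha
  filter_upwards [(hT l hl).eventually (gt_mem_nhds hl1), eventually_gt_atTop δ] with y hy hyδ
  by_contra hcon
  push Not at hcon
  set g : ℝ → ℝ := fun v => (η + C) * (Ioc (-δ) δ).indicator (Kl l) v - C * Kl l v with hg
  have hgi : Integrable g := (((Kl_int hl).indicator measurableSet_Ioc).const_mul _).sub ((Kl_int hl).const_mul _)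
  have hgint : ∫ v, g v = (η + C) * a - C * κ := by
    rw [hg, integral_sub (((Kl_int hl).indicator measurableSet_Ioc).const_mul _) ((Kl_int hl).const_mul _),
      integral_const_mul, integral_const_mul, Kl_mass hl, integral_indicator measurableSet_Ioc, ha,
      intervalIntegral.integral_of_le (by linarith)]
  have hk0 : ∀ v, 0 ≤ Kl l v := fun v => mul_nonneg hl.le (K1_nonneg _)
  have hC : 0 ≤ C := (abs_nonneg _).trans (hb 0)
  have i2 : Integrable (fun u => h u * Kl l (y - u)) := by
    refine Integrable.bdd_mul (c := C) ((Kl_int hl).comp_sub_left y) hm.aestronglyMeasurable (Eventually.of_forall fun u => hb u)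
  have : ∫ u, g (y - u) ≤ ∫ u in Ioi (0:ℝ), h u * Kl l (y - u) := by
    rw [← integral_indicator measurableSet_Ioi]
    refine integral_mono (hgi.comp_sub_left y) (i2.indicator measurableSet_Ioi) fun u => ?_
    simp only [hg]
    by_cases hu : y - u ∈ Ioc (-δ) δ
    · have hu0 : u ∈ Ioi (0:ℝ) := by simp only [mem_Ioi]; linarith [hu.2]
      rw [indicator_of_mem hu, indicator_of_mem hu0]
      have := hcon u ⟨by linarith [hu.2], by linarith [hu.1]⟩
      nlinarith [hk0 (y - u)]
    · rw [indicator_of_notMem hu]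
      by_cases hu0 : u ∈ Ioi (0:ℝ)
      · rw [indicator_of_mem hu0]
        have := (abs_le.1 (hb u)).1
        nlinarith [hk0 (y - u)]
      · rw [indicator_of_notMem hu0]
        have := mul_nonneg hC (hk0 (y - u))
        linarith
  rw [integral_sub_left_eq_self g volume y, hgint] at this
  linarith

lemma hh_mono {u v : ℝ} (huv : u ≤ v) : (1 + hh u) ≤ (1 + hh v) * Real.exp (v - u) := by
  unfold hh
  have := Chebyshev.psi_mono (Real.exp_le_exp.2 huv)
  have e : Real.exp (-v) * Real.exp (v - u) = Real.exp (-u) := by rw [← Real.exp_add]; congr 1; ring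
  have : Chebyshev.psi (Real.exp u) * Real.exp (-u) ≤ Chebyshev.psi (Real.exp v) * Real.exp (-u) :=
    mul_le_mul_of_nonneg_right this (Real.exp_pos _).le
  rw [show (1 + (Chebyshev.psi (Real.exp v) * Real.exp (-v) - 1)) * Real.exp (v - u) = Chebyshev.psi (Real.exp v) * (Real.exp (-v) * Real.exp (v - u)) by ring, e]
  linarith

lemma hh_tendsto : Tendsto hh atTop (𝓝 0) := by
  obtain ⟨G, hG, hL⟩ := hh_laplace
  have hT := fun l (hl : 0 < l) => Kl_tendsto hh_meas hh_bdd hG hL hl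
  have hT' : ∀ l : ℝ, 0 < l → Tendsto (fun y : ℝ => ∫ u in Ioi (0:ℝ), (fun u => - hh u) u * Kl l (y - u)) atTop (𝓝 0) := by
    intro l hl
    have := (hT l hl).neg
    simpa [integral_neg] using this
  have hexp : ∀ c : ℝ, 0 < c → ∃ δ : ℝ, 0 < δ ∧ Real.exp (2 * δ) < 1 + c := by
    intro c hc
    refine ⟨Real.log (1 + c) / 4, by have := Real.log_pos (by linarith : 1 < 1 + c); positivity, ?_⟩
    have := Real.log_pos (by linarith : 1 < 1 + c)
    rw [← Real.lt_log_iff_exp_lt (by linarith)]; linarith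
  rw [Metric.tendsto_nhds]
  intro ε hε
  set C := Real.log 4 + 5
  have hC : 0 < C := by have := Real.log_nonneg (by norm_num : (1:ℝ) ≤ 4); positivity
  obtain ⟨δ, hδ, hδ2⟩ := hexp (ε / (2 * (C + 1 + ε))) (by positivity)
  have c1 := core hh_meas hh_bdd hT (η := ε / 2) (δ := δ) (by positivity) hδ
  have c2 := core hh_meas.neg (C := C) (fun u => by simpa using hh_bdd u) hT' (η := ε / 2) (δ := δ) (by positivity) hδ
  have t1 := (tendsto_atTop_add_const_right atTop δ tendsto_id).eventually c1
  have t2 := (tendsto_atTop_add_const_right atTop (-δ) tendsto_id).eventually c2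
  filter_upwards [t1, t2] with y h1 h2
  obtain ⟨u, hu, hu2⟩ := h1
  obtain ⟨v, hv, hv2⟩ := h2
  simp only [id, mem_Icc] at hu hv
  have m1 := hh_mono (u := y) (v := u) (by linarith)
  have m2 := hh_mono (u := v) (v := y) (by linarith)
  have e1 : Real.exp (u - y) ≤ Real.exp (2 * δ) := Real.exp_le_exp.2 (by linarith)
  have e2 : Real.exp (y - v) ≤ Real.exp (2 * δ) := Real.exp_le_exp.2 (by linarith)
  have by1 := abs_le.1 (hh_bdd y)
  have p1 : ∀ u, 0 ≤ 1 + hh u := fun u => by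
    unfold hh; have := Chebyshev.psi_nonneg (Real.exp u); have := Real.exp_pos (-u)
    have : 0 ≤ Chebyshev.psi (Real.exp u) * Real.exp (-u) := by positivity
    linarith
  have hd : ε / (2 * (C + 1 + ε)) * (C + 1 + ε) = ε / 2 := by field_simp
  set q := ε / (2 * (C + 1 + ε)) with hq
  have hq0 : 0 < q := by positivity
  have hq1 : q ≤ 1 / 2 := by rw [hq, div_le_iff₀ (by positivity)]; nlinarith
  rw [Real.dist_eq, sub_zero, abs_lt]
  have f1 : (1 + hh u) * Real.exp (u - y) ≤ (1 + hh u) * (1 + q) := mul_le_mul_of_nonneg_left (by linarith) (p1 u)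
  have f2 : (1 + hh y) * Real.exp (y - v) ≤ (1 + hh y) * (1 + q) := mul_le_mul_of_nonneg_left (by linarith) (p1 y)
  have v2 : - hh v < ε / 2 := hv2
  constructor
  · nlinarith
  · nlinarith
end
end PNT

end

section
open MeasureTheory Filter Topology Set

namespace PNT
noncomputable section

def ff (x : ℝ) : ℝ := (Nat.primeCounting ⌊x⌋₊ : ℝ) * Real.log x / x

lemma psi_div : Tendsto (fun x : ℝ => Chebyshev.psi x / x) atTop (𝓝 1) := by
  have := (hh_tendsto.comp Real.tendsto_log_atTop).add_const 1
  rw [zero_add] at this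
  refine this.congr' ?_
  filter_upwards [eventually_gt_atTop 0] with x hx
  simp only [hh, Function.comp, Real.exp_neg, Real.exp_log hx]
  rw [div_eq_mul_inv]; ring

lemma theta_div : Tendsto (fun x : ℝ => Chebyshev.theta x / x) atTop (𝓝 1) := by
  have h1 : (fun x : ℝ => (Chebyshev.psi - Chebyshev.theta) x) =o[atTop] (fun x : ℝ => x) := by
    refine Chebyshev.isBigO_psi_sub_theta_sqrt.trans_isLittleO ?_
    refine Asymptotics.isLittleO_of_tendsto' ?_ ?_
    · filter_upwards [eventually_gt_atTop 0] with x hx h0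
      linarith
    · have : Tendsto (fun x : ℝ => (Real.sqrt x)⁻¹) atTop (𝓝 0) := Real.tendsto_sqrt_atTop.inv_tendsto_atTop
      refine this.congr fun x => ?_
      rw [Real.sqrt_div_self']; simp
  have h2 := psi_div.sub h1.tendsto_div_nhds_zero
  rw [sub_zero] at h2
  refine h2.congr fun x => ?_
  simp only [Pi.sub_apply]; ring

lemma ff_tendsto : Tendsto ff atTop (𝓝 1) := by
  have h1 := Chebyshev.primeCounting_sub_theta_div_log_isBigO
  have h2 : (fun x : ℝ => x / Real.log x ^ 2) =o[atTop] (fun x : ℝ => x / Real.log x) := by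
    have : (fun x : ℝ => (Real.log x)⁻¹) =o[atTop] (fun _ : ℝ => (1:ℝ)) := by
      rw [Asymptotics.isLittleO_one_iff]
      exact Real.tendsto_log_atTop.inv_tendsto_atTop
    have h3 := (Asymptotics.isBigO_refl (fun x : ℝ => x / Real.log x) atTop).mul_isLittleO this
    refine h3.congr (fun x => ?_) (fun x => by ring)
    rw [sq, div_mul_eq_div_div, div_eq_mul_inv (x / Real.log x)]
  have h4 := (h1.trans_isLittleO h2).tendsto_div_nhds_zero
  have h5 := h4.add theta_div
  rw [zero_add] at h5
  refine h5.congr' ?_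
  filter_upwards [eventually_gt_atTop 1] with x hx
  have := Real.log_pos hx
  unfold ff
  have hx0 : x ≠ 0 := by linarith
  field_simp
  ring

lemma pi_eq_ff {x : ℝ} (hx : 1 < x) : (Nat.primeCounting ⌊x⌋₊ : ℝ) = ff x * x / Real.log x := by
  have := Real.log_pos hx
  have : x ≠ 0 := by linarith
  unfold ff; field_simp

lemma floor_nat_div (n j : ℕ) : ⌊(n:ℝ) / j⌋₊ = n / j := Nat.floor_div_eq_div n j

lemma pi_ratio (m : ℕ) (hm : 0 < m) :
    Tendsto (fun n : ℕ => (Nat.primeCounting (n / m) : ℝ) / Nat.primeCounting n) atTop (𝓝 (1 / m)) := by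
  have hmr : (0:ℝ) < m := by exact_mod_cast hm
  have t0 : Tendsto (fun n : ℕ => (n : ℝ)) atTop atTop := tendsto_natCast_atTop_atTop
  have t1 : Tendsto (fun n : ℕ => (n : ℝ) / m) atTop atTop := t0.atTop_div_const hmr
  have f0 := ff_tendsto.comp t0
  have f1 := ff_tendsto.comp t1
  have hl : Tendsto (fun n : ℕ => Real.log n / Real.log (n / m)) atTop (𝓝 1) := by
    have a : Tendsto (fun n : ℕ => 1 + Real.log m * (Real.log ((n:ℝ) / m))⁻¹) atTop (𝓝 (1 + Real.log m * 0)) :=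
      ((Real.tendsto_log_atTop.comp t1).inv_tendsto_atTop.const_mul _).const_add _
    rw [mul_zero, add_zero] at a
    refine a.congr' ?_
    filter_upwards [t1.eventually (eventually_gt_atTop 1), t0.eventually (eventually_gt_atTop 0)] with n hn hn0
    have := Real.log_pos hn
    have e : Real.log n = Real.log (n / m) + Real.log m := by
      rw [Real.log_div hn0.ne' hmr.ne']; ring
    rw [e]; field_simp
  have := ((f1.div f0 one_ne_zero).mul hl).mul_const ((1:ℝ) / m)
  rw [div_one, one_mul, one_mul] at this
  refine this.congr' ?_
  filter_upwards [t1.eventually (eventually_gt_atTop 1), t0.eventually (eventually_gt_atTop 1),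
    f0.eventually (lt_mem_nhds (show (0:ℝ) < 1 by norm_num))] with n hn hn0 hf
  simp only [Function.comp] at hf
  have e1 := pi_eq_ff hn
  have e2 := pi_eq_ff hn0
  rw [floor_nat_div] at e1
  rw [Nat.floor_natCast] at e2
  rw [e1, e2]
  have := Real.log_pos hn
  have := Real.log_pos hn0
  simp only [Function.comp, Pi.div_apply]
  field_simp

lemma ff_bounds : ∃ X : ℝ, ∀ x, X ≤ x → 1 / 2 ≤ ff x ∧ ff x ≤ 2 := by
  have a := ff_tendsto.eventually (lt_mem_nhds (show (1/2:ℝ) < 1 by norm_num))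
  have b := ff_tendsto.eventually (gt_mem_nhds (show (1:ℝ) < 2 by norm_num))
  obtain ⟨X, hX⟩ := eventually_atTop.1 (a.and b)
  exact ⟨X, fun x hx => ⟨(hX x hx).1.le, (hX x hx).2.le⟩⟩

lemma pi_lower : ∀ᶠ n : ℕ in atTop, (n : ℝ) / (2 * Real.log n) ≤ Nat.primeCounting n := by
  obtain ⟨X, hX⟩ := ff_bounds
  have t0 : Tendsto (fun n : ℕ => (n : ℝ)) atTop atTop := tendsto_natCast_atTop_atTop
  filter_upwards [t0.eventually (eventually_ge_atTop X), t0.eventually (eventually_gt_atTop 1)] with n h1 h2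
  have e := pi_eq_ff h2
  rw [Nat.floor_natCast] at e
  rw [e]
  have := Real.log_pos h2
  rw [div_le_div_iff₀ (by positivity) this]
  have := (hX _ h1).1
  have : 0 < (n:ℝ) * Real.log n := by positivity
  nlinarith

lemma pi_cheb : ∀ᶠ n : ℕ in atTop, ∀ j : ℕ, 1 ≤ j → j ^ 10 ≤ n →
    (Nat.primeCounting (n / j) : ℝ) ≤ 5 * Nat.primeCounting n / j := by
  obtain ⟨X, hX⟩ := ff_bounds
  have t0 : Tendsto (fun n : ℕ => (n : ℝ)) atTop atTop := tendsto_natCast_atTop_atTop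
  have t1 : Tendsto (fun n : ℕ => (n : ℝ) ^ (1/2 : ℝ)) atTop atTop := (tendsto_rpow_atTop (by norm_num)).comp t0
  filter_upwards [pi_lower, t0.eventually (eventually_gt_atTop 1), t1.eventually (eventually_ge_atTop X),
    t1.eventually (eventually_gt_atTop 1)] with n hlow hn hX1 h1 j hj hjn
  have hj0 : (0:ℝ) < j := by exact_mod_cast hj
  have hL := Real.log_pos hn
  have hjl : 10 * Real.log j ≤ Real.log n := by
    rw [show (10:ℝ) * Real.log j = Real.log ((j:ℝ)^10) by rw [Real.log_pow]; norm_num]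
    exact Real.log_le_log (by positivity) (by exact_mod_cast hjn)
  have hlog : Real.log ((n:ℝ)/j) = Real.log n - Real.log j := Real.log_div (by positivity) (by positivity)
  have hge : (n:ℝ)^(1/2:ℝ) ≤ n / j := by
    rw [← Real.log_le_log_iff (by positivity) (by positivity), Real.log_rpow (by positivity), hlog]
    linarith
  have e := pi_eq_ff (h1.trans_le hge)
  rw [floor_nat_div] at e
  rw [e]
  have hl2 : 9 / 10 * Real.log n ≤ Real.log ((n:ℝ)/j) := by rw [hlog]; linarith
  have b := (hX _ (hX1.trans hge)).2
  calc ff (n/j) * (n/j) / Real.log ((n:ℝ)/j) ≤ 2 * (n/j) / (9/10 * Real.log n) := by gcongr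
    _ ≤ 5 * ((n:ℝ) / (2 * Real.log n)) / j := by
        rw [div_le_div_iff₀ (by positivity) hj0]
        field_simp
        nlinarith
    _ ≤ _ := by gcongr
end
end PNT

end

section

namespace Cnt
open Finset

lemma sidon_six {A : Finset ℕ} (hA : MulKSidon 3 A) {a₁ a₂ a₃ b₁ b₂ b₃ : ℕ}
    (h1 : a₁ ∈ A) (h2 : a₂ ∈ A) (h3 : a₃ ∈ A) (h4 : b₁ ∈ A) (h5 : b₂ ∈ A) (h6 : b₃ ∈ A)
    (hn : [a₁, a₂, a₃, b₁, b₂, b₃].Nodup) (he : a₁ * a₂ * a₃ = b₁ * b₂ * b₃) : False := by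
  apply hA
  refine ⟨![a₁, a₂, a₃], ![b₁, b₂, b₃], ?_, ?_, ?_, ?_⟩
  · intro i; fin_cases i <;> simpa
  · intro i; fin_cases i <;> simpa
  · simp only [List.nodup_cons, List.mem_cons, not_or, List.not_mem_nil, not_false_eq_true] at hn
    rintro (i | i) (j | j) <;> fin_cases i <;> fin_cases j <;> simp <;> grind
  · simp [Fin.prod_univ_three, he]

lemma k33 {A : Finset ℕ} (hA : MulKSidon 3 A) (I X : Finset ℕ) (f : ℕ → Finset ℕ)
    (hf : ∀ i ∈ I, f i ⊆ X) (hA' : ∀ i ∈ I, ∀ x ∈ f i, i * x ∈ A)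
    (hinj : ∀ i ∈ I, ∀ x ∈ f i, ∀ j ∈ I, ∀ y ∈ f j, i * x = j * y → i = j ∧ x = y) :
    (I.filter (fun i => 3 ≤ (f i).card)).card ≤ 2 * X.card ^ 3 := by
  by_contra hlt
  push Not at hlt
  set J := I.filter (fun i => 3 ≤ (f i).card) with hJ
  have hex : ∀ i ∈ J, ∃ t, t ⊆ f i ∧ t.card = 3 := fun i hi =>
    exists_subset_card_eq (mem_filter.1 hi).2
  choose! t ht1 ht2 using hex
  have hmaps : ∀ i ∈ J, t i ∈ powersetCard 3 X := fun i hi =>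
    mem_powersetCard.2 ⟨(ht1 i hi).trans (hf i (mem_filter.1 hi).1), ht2 i hi⟩
  have hc : (powersetCard 3 X).card * 2 < J.card := by
    rw [card_powersetCard]
    have := Nat.choose_le_pow X.card 3
    omega
  obtain ⟨s, hs, hs2⟩ := exists_lt_card_fiber_of_mul_lt_card_of_maps_to hmaps hc
  obtain ⟨x, y, z, hxy, hxz, hyz, rfl⟩ := card_eq_three.1 (mem_powersetCard.1 hs).2
  obtain ⟨i, j, k, hi, hj, hk, hij, hik, hjk⟩ := two_lt_card_iff.1 hs2
  simp only [mem_filter] at hi hj hk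
  have key : ∀ i ∈ J, t i = {x, y, z} → i ∈ I ∧ x ∈ f i ∧ y ∈ f i ∧ z ∈ f i := by
    intro i hi h
    have := ht1 i hi
    rw [h] at this
    exact ⟨(mem_filter.1 hi).1, this (by simp), this (by simp), this (by simp)⟩
  obtain ⟨iI, ix, iy, iz⟩ := key i hi.1 hi.2
  obtain ⟨jI, jx, jy, jz⟩ := key j hj.1 hj.2
  obtain ⟨kI, kx, ky, kz⟩ := key k hk.1 hk.2
  refine sidon_six hA (hA' i iI x ix) (hA' j jI y jy) (hA' k kI z kz)
    (hA' i iI y iy) (hA' j jI z jz) (hA' k kI x kx) ?_ (by ring)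
  simp only [List.nodup_cons, List.mem_cons, not_or, List.not_mem_nil, not_false_eq_true, or_false,
    List.nodup_nil, and_true]
  refine ⟨⟨?_, ?_, ?_, ?_, ?_⟩, ⟨?_, ?_, ?_, ?_⟩, ⟨?_, ?_, ?_⟩, ⟨?_, ?_⟩, ?_⟩ <;> intro h
  · exact hij (hinj _ iI _ ix _ jI _ jy h).1
  · exact hik (hinj _ iI _ ix _ kI _ kz h).1
  · exact hxy (hinj _ iI _ ix _ iI _ iy h).2
  · exact hij (hinj _ iI _ ix _ jI _ jz h).1
  · exact hik (hinj _ iI _ ix _ kI _ kx h).1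
  · exact hjk (hinj _ jI _ jy _ kI _ kz h).1
  · exact hij (hinj _ jI _ jy _ iI _ iy h).1.symm
  · exact hyz (hinj _ jI _ jy _ jI _ jz h).2
  · exact hjk (hinj _ jI _ jy _ kI _ kx h).1
  · exact hik (hinj _ kI _ kz _ iI _ iy h).1.symm
  · exact hjk (hinj _ kI _ kz _ jI _ jz h).1.symm
  · exact hxz (hinj _ kI _ kz _ kI _ kx h).2.symm
  · exact hij (hinj _ iI _ iy _ jI _ jz h).1
  · exact hik (hinj _ iI _ iy _ kI _ kx h).1
  · exact hjk (hinj _ jI _ jz _ kI _ kx h).1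

/-- the big primes -/
noncomputable def bigP (n D : ℕ) : Finset ℕ := (Icc 1 n).filter (fun p => p.Prime ∧ n / p < D)

lemma mem_bigP {n D p : ℕ} : p ∈ bigP n D ↔ p.Prime ∧ p ≤ n ∧ n / p < D := by
  simp only [bigP, mem_filter, mem_Icc]
  constructor
  · rintro ⟨h1, h2, h3⟩; exact ⟨h2, h1.2, h3⟩
  · rintro ⟨h1, h2, h3⟩; exact ⟨⟨h1.one_lt.le, h2⟩, h1, h3⟩

lemma bigP_lt {n D p : ℕ} (hp : p ∈ bigP n D) : n < D * p := by
  have h := mem_bigP.1 hp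
  exact (Nat.div_lt_iff_lt_mul h.1.pos).1 h.2.2

lemma bigP_uniq {n D : ℕ} (hD : D * D ≤ n) {p q a : ℕ} (hp : p ∈ bigP n D) (hq : q ∈ bigP n D)
    (ha : 1 ≤ a) (han : a ≤ n) (hpa : p ∣ a) (hqa : q ∣ a) : p = q := by
  by_contra hne
  have hpp := (mem_bigP.1 hp).1
  have hqp := (mem_bigP.1 hq).1
  have hco : p.Coprime q := (Nat.coprime_primes hpp hqp).2 hne
  have := Nat.le_of_dvd ha (hco.mul_dvd_of_dvd_of_dvd hpa hqa)
  have h1 := bigP_lt hp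
  have h2 := bigP_lt hq
  have : D < q := by
    by_contra h
    push Not at h
    have : D * q ≤ D * D := Nat.mul_le_mul_left _ h
    omega
  have : p * D ≤ p * q := Nat.mul_le_mul_left _ this.le
  rw [mul_comm] at h1
  omega

lemma exists_div {B a : ℕ} (hB : 1 ≤ B) (ha : B ≤ a) : ∃ u, u ∣ a ∧ B ≤ u ∧ (u.Prime ∨ u < B * B ∨ u = 1) := by
  have hex : ∃ u, u ∣ a ∧ B ≤ u := ⟨a, dvd_rfl, ha⟩
  set u := Nat.find hex with hu
  obtain ⟨h1, h2⟩ := Nat.find_spec hex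
  refine ⟨u, h1, h2, ?_⟩
  by_cases hup : u.Prime
  · exact Or.inl hup
  by_cases hu1 : u = 1
  · exact Or.inr (Or.inr hu1)
  right; left
  have hu0 : 0 < u := by omega
  set q := u.minFac with hq
  have hqp : q.Prime := Nat.minFac_prime hu1
  obtain ⟨r, hr⟩ := Nat.minFac_dvd u
  rw [← hq] at hr
  have hr0 : 0 < r := Nat.pos_of_ne_zero (by rintro rfl; omega)
  have hrlt : r < u := by
    rw [hr]; have := hqp.two_le; nlinarith
  have hrB : r < B := by
    by_contra h
    exact Nat.find_min hex hrlt ⟨(Dvd.intro_left q hr.symm).trans h1, not_lt.1 h⟩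
  have hqsq := Nat.minFac_sq_le_self hu0 hup
  rw [← hq] at hqsq
  have hqr : q ≤ r := by
    by_contra h
    push Not at h
    have : q * r < q * q := Nat.mul_lt_mul_of_pos_left h hqp.pos
    rw [← hr] at this
    nlinarith
  calc u = q * r := hr
    _ < B * B := by nlinarith

lemma sum_card_le {I : Finset ℕ} {f : ℕ → Finset ℕ} {b N : ℕ} (hb : ∀ i ∈ I, (f i).card ≤ b)
    (hN : (I.filter (fun i => 3 ≤ (f i).card)).card ≤ N) :
    ∑ i ∈ I, (f i).card ≤ 2 * I.card + N * b := by
  rw [← sum_filter_add_sum_filter_not I (fun i => 3 ≤ (f i).card)]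
  have h1 : ∑ i ∈ I.filter (fun i => 3 ≤ (f i).card), (f i).card ≤ N * b := by
    calc _ ≤ ∑ i ∈ I.filter (fun i => 3 ≤ (f i).card), b := sum_le_sum fun i hi => hb i (mem_filter.1 hi).1
      _ = _ := by rw [sum_const, smul_eq_mul]
      _ ≤ _ := Nat.mul_le_mul_right _ hN
  have h2 : ∑ i ∈ I.filter (fun i => ¬ 3 ≤ (f i).card), (f i).card ≤ 2 * I.card := by
    calc _ ≤ ∑ i ∈ I.filter (fun i => ¬ 3 ≤ (f i).card), 2 := sum_le_sum fun i hi => by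
            have := (mem_filter.1 hi).2; omega
      _ = _ := by rw [sum_const, smul_eq_mul, mul_comm]
      _ ≤ _ := Nat.mul_le_mul_left _ (card_filter_le _ _)
  omega

lemma small_bound {n B D : ℕ} (hB : 1 ≤ B) (hD : 1 ≤ D) (hBD : B * B * D ≤ n) {A : Finset ℕ}
    (hA : MulKSidon 3 A) (hAn : A ⊆ Icc 1 n) :
    (A.filter (fun a => ∀ p ∈ bigP n D, ¬ p ∣ a)).card ≤
      B + ∑ j ∈ Icc 1 (n / (D * B)), (2 * (n / (j * B)) + 2 * B ^ 4) := by
  set S := A.filter (fun a => ∀ p ∈ bigP n D, ¬ p ∣ a) with hS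
  have hex : ∀ a ∈ S.filter (fun a => B ≤ a), ∃ u, u ∣ a ∧ B ≤ u ∧ u * D ≤ n := by
    intro a ha
    rw [mem_filter] at ha
    obtain ⟨haS, haB⟩ := ha
    rw [hS, mem_filter] at haS
    obtain ⟨haA, hap⟩ := haS
    have han := mem_Icc.1 (hAn haA)
    obtain ⟨u, h1, h2, h3⟩ := exists_div hB haB
    refine ⟨u, h1, h2, ?_⟩
    rcases h3 with h | h | h
    · by_contra hlt
      refine hap u (mem_bigP.2 ⟨h, (Nat.le_of_dvd han.1 h1).trans han.2, ?_⟩) h1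
      rw [Nat.div_lt_iff_lt_mul h.pos, mul_comm]; omega
    · exact (Nat.mul_le_mul_right D h.le).trans hBD
    · subst h
      have : 1 * 1 * D ≤ B * B * D := by gcongr
      omega
  choose! u hu1 hu2 hu3 using hex
  set T := S.filter (fun a => B ≤ a) with hT
  have hTmem : ∀ a ∈ T, a ∈ A ∧ 1 ≤ a ∧ a ≤ n := fun a ha => by
    have : a ∈ A := (mem_filter.1 (mem_filter.1 ha).1).1
    exact ⟨this, mem_Icc.1 (hAn this)⟩
  have hcard : S.card ≤ B + T.card := by
    rw [← card_filter_add_card_filter_not (s := S) (fun a => B ≤ a), add_comm]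
    gcongr
    calc (S.filter (fun a => ¬ B ≤ a)).card ≤ (range B).card := card_le_card fun a ha => by
          rw [mem_filter] at ha; rw [mem_range]; omega
      _ = B := card_range B
  refine hcard.trans (Nat.add_le_add_left ?_ B)
  have hmaps : ∀ a ∈ T, u a / B ∈ Icc 1 (n / (D * B)) := fun a ha => by
    rw [mem_Icc]
    refine ⟨(Nat.one_le_div_iff hB).2 (hu2 a ha), ?_⟩
    rw [← Nat.div_div_eq_div_mul]
    exact Nat.div_le_div_right ((Nat.le_div_iff_mul_le hD).2 (hu3 a ha))
  rw [card_eq_sum_card_fiberwise hmaps]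
  refine sum_le_sum fun j hj => ?_
  have hj1 := (mem_Icc.1 hj).1
  set W := T.filter (fun a => u a / B = j) with hW
  set I := Icc 1 (n / (j * B)) with hI
  set f : ℕ → Finset ℕ := fun v => (Ico (j * B) ((j + 1) * B)).filter (fun x => v * x ∈ W ∧ u (v * x) = x) with hf
  have hX : (Ico (j * B) ((j + 1) * B)).card = B := by rw [Nat.card_Ico, add_mul]; omega
  have hsum : W.card ≤ ∑ v ∈ I, (f v).card := by
    rw [← card_sigma]
    refine card_le_card_of_injOn (fun a => ⟨a / u a, u a⟩) ?_ ?_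
    · intro a ha
      have ha := mem_coe.1 ha
      have haT := (mem_filter.1 ha).1
      have haj := (mem_filter.1 ha).2
      have hmul : a / u a * u a = a := Nat.div_mul_cancel (hu1 a haT)
      have hb := hTmem a haT
      have hu0 : 0 < u a := lt_of_lt_of_le hB (hu2 a haT)
      have hjB : j * B ≤ u a := by rw [← haj]; exact Nat.div_mul_le_self _ _
      simp only [coe_sigma, Set.mem_sigma_iff, mem_coe, hI, hf, mem_Icc, mem_filter, mem_Ico]
      refine ⟨⟨?_, ?_⟩, ⟨hjB, ?_⟩, ?_, ?_⟩
      · exact Nat.div_pos (Nat.le_of_dvd hb.2.1 (hu1 a haT)) hu0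
      · exact (Nat.div_le_div_left hjB (by positivity)).trans (Nat.div_le_div_right hb.2.2)
      · rw [← haj]
        exact Nat.lt_mul_of_div_lt (Nat.lt_succ_self _) hB
      · rw [hmul]; exact ha
      · rw [hmul]
    · intro a ha b hb hab
      have ha := (mem_filter.1 (mem_coe.1 ha)).1
      have hb := (mem_filter.1 (mem_coe.1 hb)).1
      simp only [Sigma.mk.injEq, heq_eq_eq] at hab
      rw [← Nat.div_mul_cancel (hu1 a ha), ← Nat.div_mul_cancel (hu1 b hb), hab.1, hab.2]
  have hk := k33 hA I (Ico (j * B) ((j + 1) * B)) f (fun i _ => filter_subset _ _)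
    (fun i _ x hx => (hTmem _ (mem_filter.1 (mem_filter.1 hx).2.1).1).1) (by
      intro i hi x hx k hk y hy he
      have hx2 := (mem_filter.1 hx).2.2
      have hy2 := (mem_filter.1 hy).2.2
      have hxy : x = y := by rw [← hx2, ← hy2, he]
      subst hxy
      have hx0 : 0 < x := by
        have := (mem_Ico.1 (mem_filter.1 hx).1).1
        have : 0 < j * B := by positivity
        omega
      exact ⟨Nat.eq_of_mul_eq_mul_right hx0 he, rfl⟩)
  rw [hX] at hk
  have h2 := sum_card_le (I := I) (f := f) (b := B) (fun i _ => (card_filter_le _ _).trans hX.le) hk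
  have hIc : I.card = n / (j * B) := by simp [hI]
  rw [hIc] at h2
  calc W.card ≤ _ := hsum
    _ ≤ _ := h2
    _ = _ := by ring
end Cnt

end

section

namespace Cnt
open Finset

noncomputable def Opt (G : SimpleGraph ℕ) (m : ℕ) : Finset (Finset ℕ) :=
  (Icc 1 m).powerset.filter (fun S => S.card ≤ 1 ∨ ∃ x y, G.Adj x y ∧ S = {x, y})

lemma mem_Opt {G : SimpleGraph ℕ} {m : ℕ} {S : Finset ℕ} :
    S ∈ Opt G m ↔ S ⊆ Icc 1 m ∧ (S.card ≤ 1 ∨ ∃ x y, G.Adj x y ∧ S = {x, y}) := by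
  simp [Opt]

lemma card_Opt (G : SimpleGraph ℕ) (m : ℕ) : (Opt G m).card = eOn G m + m + 1 := by
  have h : Opt G m = (powersetCard 0 (Icc 1 m) ∪ powersetCard 1 (Icc 1 m)) ∪
      (((Icc 1 m) ×ˢ (Icc 1 m)).filter
    (fun p => p.1 < p.2 ∧ G.Adj p.1 p.2)).image (fun p => ({p.1, p.2} : Finset ℕ)) := by
    ext S
    simp only [mem_Opt, mem_union, mem_powersetCard, mem_image, mem_filter, mem_product]
    constructor
    · rintro ⟨h1, h2 | ⟨x, y, hxy, rfl⟩⟩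
      · left
        rcases Nat.le_one_iff_eq_zero_or_eq_one.1 h2 with h | h <;> simp [h, h1]
      · right
        have hx := h1 (mem_insert_self x _)
        have hy := h1 (mem_insert_of_mem (mem_singleton_self y))
        rcases lt_or_gt_of_ne hxy.ne with h | h
        · exact ⟨(x, y), ⟨⟨hx, hy⟩, h, hxy⟩, rfl⟩
        · exact ⟨(y, x), ⟨⟨hy, hx⟩, h, hxy.symm⟩, pair_comm _ _⟩
    · rintro ((⟨h1, h2⟩ | ⟨h1, h2⟩) | ⟨p, ⟨⟨hx, hy⟩, h, hxy⟩, rfl⟩)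
      · exact ⟨h1, Or.inl (by omega)⟩
      · exact ⟨h1, Or.inl (by omega)⟩
      · refine ⟨?_, Or.inr ⟨_, _, hxy, rfl⟩⟩
        intro z hz
        simp only [mem_insert, mem_singleton] at hz
        rcases hz with rfl | rfl <;> assumption
  rw [h, card_union_of_disjoint, card_union_of_disjoint, card_image_of_injOn]
  · simp [eOn]; ring
  · rintro ⟨a, b⟩ h1 ⟨c, d⟩ h2 h3
    have h1 := (mem_filter.1 (mem_coe.1 h1)).2.1
    have h2 := (mem_filter.1 (mem_coe.1 h2)).2.1
    have h3 : ({a, b} : Finset ℕ) = {c, d} := h3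
    have ha : a ∈ ({c, d} : Finset ℕ) := by rw [← h3]; simp
    have hb : b ∈ ({c, d} : Finset ℕ) := by rw [← h3]; simp
    simp only [mem_insert, mem_singleton] at ha hb
    simp only at h1 h2
    simp only [Prod.mk.injEq]
    omega
  · rw [disjoint_left]
    intro S h1 h2
    simp only [mem_powersetCard] at h1 h2
    omega
  · rw [disjoint_left]
    intro S h1 h2
    simp only [mem_union, mem_powersetCard, mem_image, mem_filter] at h1 h2
    obtain ⟨p, ⟨_, hp, _⟩, rfl⟩ := h2
    rw [card_pair hp.ne] at h1
    omega

noncomputable def fib (n : ℕ) (A : Finset ℕ) (p : ℕ) : Finset ℕ :=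
  (Icc 1 (n / p)).filter (fun x => p * x ∈ A)

lemma mem_fib {n p x : ℕ} {A : Finset ℕ} :
    x ∈ fib n A p ↔ (1 ≤ x ∧ x ≤ n / p) ∧ p * x ∈ A := by simp [fib]

lemma fib_of_mul {n p x : ℕ} {A : Finset ℕ} (hA : A ⊆ Icc 1 n) (hp : 0 < p) (h : p * x ∈ A) :
    x ∈ fib n A p := by
  have := mem_Icc.1 (hA h)
  refine mem_fib.2 ⟨⟨?_, ?_⟩, h⟩
  · rcases Nat.eq_zero_or_pos x with rfl | h
    · simp at this
    · exact h
  · rw [Nat.le_div_iff_mul_le hp, mul_comm]; exact this.2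

noncomputable def Reg (n D : ℕ) (G : SimpleGraph ℕ) : Finset (Finset ℕ) :=
  (Icc 1 n).powerset.filter (fun A => (∀ a ∈ A, ∃ p ∈ bigP n D, p ∣ a) ∧
    ∀ p ∈ bigP n D, fib n A p ∈ Opt G (n / p))

lemma card_Reg_le (n D : ℕ) (G : SimpleGraph ℕ) :
    (Reg n D G).card ≤ ∏ p ∈ bigP n D, (eOn G (n / p) + (n / p) + 1) := by
  simp_rw [← card_Opt]
  rw [← card_pi]
  apply card_le_card_of_injOn (fun A => fun p _ => fib n A p)
  · intro A hA
    have hA := mem_filter.1 (mem_coe.1 hA)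
    exact mem_coe.2 (mem_pi.2 hA.2.2)
  · have key : ∀ A ∈ Reg n D G, ∀ B ∈ Reg n D G,
      (fun (p : ℕ) (_ : p ∈ bigP n D) => fib n A p) = (fun p _ => fib n B p) → A ⊆ B := by
      intro A hA B hB h a ha
      have hA := mem_filter.1 hA
      have hA1 := mem_powerset.1 hA.1
      obtain ⟨p, hp, x, rfl⟩ := hA.2.1 a ha
      have := fib_of_mul hA1 (mem_bigP.1 hp).1.pos ha
      have h2 := congrFun (congrFun h p) hp
      rw [h2] at this
      exact (mem_fib.1 this).2
    intro A hA B hB h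
    exact Subset.antisymm (key A hA B hB h) (key B hB A hA h.symm)

noncomputable def glue (n D : ℕ) (f : ∀ p ∈ bigP n D, Finset ℕ) : Finset ℕ :=
  (bigP n D).attach.biUnion (fun p => (f p.1 p.2).image (fun x => p.1 * x))

lemma mem_glue {n D a : ℕ} {f : ∀ p ∈ bigP n D, Finset ℕ} :
    a ∈ glue n D f ↔ ∃ p, ∃ hp : p ∈ bigP n D, ∃ x ∈ f p hp, p * x = a := by
  simp [glue]

lemma le_card_Reg (n D : ℕ) (hD : D * D ≤ n) (G : SimpleGraph ℕ) :
    ∏ p ∈ bigP n D, (eOn G (n / p) + (n / p) + 1) ≤ (Reg n D G).card := by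
  simp_rw [← card_Opt]
  rw [← card_pi]
  have hsub : ∀ f ∈ (bigP n D).pi (fun p => Opt G (n / p)), ∀ p, ∀ hp : p ∈ bigP n D,
      ∀ x ∈ f p hp, 1 ≤ x ∧ x ≤ n / p ∧ 1 ≤ p * x ∧ p * x ≤ n := by
    intro f hf p hp x hx
    have h1 := mem_Icc.1 ((mem_Opt.1 (mem_pi.1 hf p hp)).1 hx)
    have hp0 := (mem_bigP.1 hp).1.pos
    refine ⟨h1.1, h1.2, Nat.mul_pos hp0 h1.1, ?_⟩
    rw [mul_comm]; exact (Nat.le_div_iff_mul_le hp0).1 h1.2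
  have hfib : ∀ f ∈ (bigP n D).pi (fun p => Opt G (n / p)), ∀ p, ∀ hp : p ∈ bigP n D,
      fib n (glue n D f) p = f p hp := by
    intro f hf p hp
    ext x
    rw [mem_fib, mem_glue]
    constructor
    · rintro ⟨h1, q, hq, y, hy, hxy⟩
      obtain ⟨hy1, hy2, hy3, hy4⟩ := hsub f hf q hq y hy
      have : p = q := bigP_uniq hD hp hq hy3 hy4 (hxy ▸ Dvd.intro _ rfl) (Dvd.intro _ rfl)
      subst this
      have := Nat.eq_of_mul_eq_mul_left (mem_bigP.1 hp).1.pos hxy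
      rwa [← this]
    · intro hx
      obtain ⟨h1, h2, h3, h4⟩ := hsub f hf p hp x hx
      exact ⟨⟨h1, h2⟩, p, hp, x, hx, rfl⟩
  apply card_le_card_of_injOn (glue n D)
  · intro f hf
    have hf : f ∈ (bigP n D).pi (fun p => Opt G (n / p)) := hf
    refine mem_coe.2 (mem_filter.2 ⟨mem_powerset.2 ?_, ?_, ?_⟩)
    · intro a ha
      obtain ⟨p, hp, x, hx, rfl⟩ := mem_glue.1 ha
      obtain ⟨h1, h2, h3, h4⟩ := hsub f hf p hp x hx
      exact mem_Icc.2 ⟨h3, h4⟩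
    · intro a ha
      obtain ⟨p, hp, x, hx, rfl⟩ := mem_glue.1 ha
      exact ⟨p, hp, Dvd.intro _ rfl⟩
    · intro p hp
      rw [hfib f hf p hp]
      exact mem_pi.1 hf p hp
  · intro f hf g hg h
    funext p hp
    rw [← hfib f hf p hp, ← hfib g hg p hp, h]

lemma Opt_eq {G : SimpleGraph ℕ} {m : ℕ} {S : Finset ℕ} (hS : S ∈ Opt G m) {x y : ℕ}
    (hx : x ∈ S) (hy : y ∈ S) (hxy : x ≠ y) : G.Adj x y ∧ S = {x, y} := by
  rcases (mem_Opt.1 hS).2 with h | ⟨a, b, hab, rfl⟩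
  · exact absurd (card_le_one.1 h x hx y hy) hxy
  · simp only [mem_insert, mem_singleton] at hx hy
    rcases hx with rfl | rfl <;> rcases hy with rfl | rfl
    · exact absurd rfl hxy
    · exact ⟨hab, rfl⟩
    · exact ⟨hab.symm, pair_comm _ _⟩
    · exact absurd rfl hxy

lemma Reg_sidon {n D : ℕ} (hD : D * D ≤ n) {G : SimpleGraph ℕ} (hG : ProductFree G)
    {A : Finset ℕ} (hA : A ∈ Reg n D G) : MulKSidon 3 A := by
  obtain ⟨hA1, hA2, hA3⟩ := mem_filter.1 hA
  have hA1 := mem_powerset.1 hA1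
  rintro ⟨a, b, ha, hb, hinj, hprod⟩
  have hall : ∀ c ∈ A, ∃ p x, p ∈ bigP n D ∧ c = p * x ∧ x ∈ fib n A p := by
    intro c hc
    obtain ⟨p, hp, x, rfl⟩ := hA2 c hc
    exact ⟨p, x, hp, rfl, fib_of_mul hA1 (mem_bigP.1 hp).1.pos hc⟩
  have hai : Function.Injective a := fun i j h => by
    have := @hinj (Sum.inl i) (Sum.inl j) h
    simpa using this
  have hbi : Function.Injective b := fun i j h => by
    have := @hinj (Sum.inr i) (Sum.inr j) h
    simpa using this
  have hab : ∀ i j, a i ≠ b j := fun i j h => by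
    have := @hinj (Sum.inl i) (Sum.inr j) h
    simp at this
  choose p x hp hpx hx using fun i => hall (a i) (ha i)
  choose q y hq hqy hy using fun i => hall (b i) (hb i)
  have hun : ∀ r ∈ bigP n D, ∀ s ∈ bigP n D, ∀ c ∈ A, r ∣ c → s ∣ c → r = s := by
    intro r hr s hs c hc h1 h2
    have := mem_Icc.1 (hA1 hc)
    exact bigP_uniq hD hr hs this.1 this.2 h1 h2
  have hpd : ∀ r ∈ bigP n D, ∀ i, r ∣ a i → r = p i := fun r hr i h =>
    hun r hr _ (hp i) _ (ha i) h (hpx i ▸ Dvd.intro _ rfl)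
  have hqd : ∀ r ∈ bigP n D, ∀ i, r ∣ b i → r = q i := fun r hr i h =>
    hun r hr _ (hq i) _ (hb i) h (hqy i ▸ Dvd.intro _ rfl)
  -- each prime on one side occurs on the other side
  have hj : ∀ i, ∃ j, p i = q j := by
    intro i
    have h1 : p i ∣ ∏ i, b i := by
      rw [← hprod]
      exact (Dvd.intro _ (hpx i).symm).trans (dvd_prod_of_mem a (mem_univ i))
    obtain ⟨j, _, hj⟩ := ((mem_bigP.1 (hp i)).1.prime.dvd_finsetProd_iff _).1 h1
    exact ⟨j, hqd _ (hp i) j hj⟩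
  choose j hj using hj
  have hxyne : ∀ i, x i ≠ y (j i) := by
    intro i h
    apply hab i (j i)
    rw [hpx i, hqy (j i), hj i, h]
  have hyf : ∀ i, y (j i) ∈ fib n A (p i) := fun i => by rw [hj i]; exact hy _
  have hedge : ∀ i, G.Adj (x i) (y (j i)) ∧ fib n A (p i) = {x i, y (j i)} := fun i =>
    Opt_eq (hA3 _ (hp i)) (hx i) (hyf i) (hxyne i)
  have hjinj : Function.Injective j := by
    intro i k hik
    by_contra hne
    have hpe : p i = p k := by rw [hj i, hj k, hik]
    have h1 : x k ∈ fib n A (p i) := by rw [hpe]; exact hx k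
    rw [(hedge i).2] at h1
    simp only [mem_insert, mem_singleton] at h1
    rcases h1 with h1 | h1
    · exact hne (hai (by rw [hpx i, hpx k, hpe, h1]))
    · exact hxyne k (by rw [h1, hik])
  have hjb : Function.Bijective j := Finite.injective_iff_bijective.1 hjinj
  have h2 : ∏ i, b i = ∏ i, b (j i) := (Function.Bijective.prod_comp hjb b).symm
  rw [h2] at hprod
  have h3 : (∏ i, p i) * ∏ i, x i = (∏ i, p i) * ∏ i, y (j i) := by
    rw [← prod_mul_distrib, ← prod_mul_distrib]
    convert hprod using 2 with i _ i _
    · exact (hpx i).symm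
    · rw [hqy, hj]
  have h4 := Nat.eq_of_mul_eq_mul_left (prod_pos (fun i _ => (mem_bigP.1 (hp i)).1.pos)) h3
  rw [Fin.prod_univ_three, Fin.prod_univ_three] at h4
  have hx0 : ∀ i, (0:ℚ) < x i := fun i => by exact_mod_cast hG.1 _ _ (hedge i).1
  have hy0 : ∀ i, (0:ℚ) < y (j i) := fun i => by exact_mod_cast hG.1 _ _ (hedge i).1.symm
  apply hG.2 _ _ _ _ _ _ (hedge 0).1 (hedge 1).1 (hedge 2).1.symm
  have h5 : (x 0 : ℚ) * x 1 * x 2 = y (j 0) * y (j 1) * y (j 2) := by exact_mod_cast h4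
  have := hx0 2; have := hy0 0; have := hy0 1
  rw [div_mul_div_comm, div_eq_div_iff (by positivity) (by positivity)]
  linarith

lemma Sk_lower {n D : ℕ} (hD : D * D ≤ n) {G : SimpleGraph ℕ} (hG : ProductFree G) :
    ∏ p ∈ bigP n D, (eOn G (n / p) + (n / p) + 1) ≤ Sk 3 n := by
  refine (le_card_Reg n D hD G).trans (card_le_card ?_)
  intro A hA
  exact mem_filter.2 ⟨(mem_filter.1 hA).1, Reg_sidon hD hG hA⟩

end Cnt

end

section

namespace Cnt
open Finset

def gQ (Q : Finset (ℕ × ℕ)) : SimpleGraph ℕ where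
  Adj x y := x ≠ y ∧ (x, y) ∈ Q ∧ (y, x) ∈ Q
  symm := ⟨fun _ _ h => ⟨h.1.symm, h.2.2, h.2.1⟩⟩
  loopless := ⟨fun _ h => h.1 rfl⟩

def hQ (M : ℕ) (Q : Finset (ℕ × ℕ)) : SimpleGraph ℕ where
  Adj x y := x ≠ y ∧ (x ≤ M → y ≤ M → (x, y) ∈ Q ∧ (y, x) ∈ Q)
  symm := ⟨fun _ _ h => ⟨h.1.symm, fun h1 h2 => (h.2 h2 h1).symm⟩⟩
  loopless := ⟨fun _ h => h.1 rfl⟩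

lemma eOn_hQ {M m : ℕ} (hm : m ≤ M) (Q : Finset (ℕ × ℕ)) : eOn (hQ M Q) m = eOn (gQ Q) m := by
  unfold eOn
  congr 1
  apply filter_congr
  rintro ⟨x, y⟩ h
  simp only [mem_product, mem_Icc] at h
  simp only [gQ, hQ]
  constructor
  · rintro ⟨h1, h2, h3⟩
    exact ⟨h1, h2, h3 (by omega) (by omega)⟩
  · rintro ⟨h1, h2, h3⟩
    exact ⟨h1, h2, fun _ _ => h3⟩

noncomputable def QA (n D M : ℕ) (A : Finset ℕ) : Finset (ℕ × ℕ) :=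
  ((Icc 1 M) ×ˢ (Icc 1 M)).filter
    (fun z => 3 ≤ ((bigP n D).filter (fun p => fib n A p = {z.1, z.2})).card)

lemma QA_pf {n D M : ℕ} (hD : D * D ≤ n) {A : Finset ℕ} (hA : MulKSidon 3 A)
    (hAn : A ⊆ Icc 1 n) : ProductFree (gQ (QA n D M A)) := by
  have hpos : ∀ a b : ℕ, (gQ (QA n D M A)).Adj a b → 0 < a := by
    intro a b h
    have := (mem_product.1 (mem_filter.1 h.2.1).1).1
    exact (mem_Icc.1 this).1
  refine ⟨hpos, ?_⟩
  intro a₁ b₁ a₂ b₂ a₃ b₃ e1 e2 e3 he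
  have hb1 : (0:ℚ) < b₁ := by exact_mod_cast hpos _ _ e1.symm
  have hb2 : (0:ℚ) < b₂ := by exact_mod_cast hpos _ _ e2.symm
  have hb3 : (0:ℚ) < b₃ := by exact_mod_cast hpos _ _ e3.symm
  rw [div_mul_div_comm, div_eq_div_iff (by positivity) (by positivity)] at he
  have he' : a₁ * a₂ * b₃ = a₃ * (b₁ * b₂) := by exact_mod_cast he
  have c1 := (mem_filter.1 e1.2.1).2
  have c2 := (mem_filter.1 e2.2.1).2
  have c3 := (mem_filter.1 e3.2.1).2
  simp only at c1 c2 c3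
  obtain ⟨p, hp⟩ := card_pos.1 (lt_of_lt_of_le (by norm_num) c1)
  obtain ⟨q, hq, hqp⟩ := exists_mem_notMem_of_card_lt_card
    (s := {p}) (lt_of_lt_of_le (by simp) c2)
  obtain ⟨r, hr, hrp⟩ := exists_mem_notMem_of_card_lt_card
    (s := {p, q}) (lt_of_lt_of_le (lt_of_le_of_lt (card_le_two) (by norm_num)) c3)
  simp only [mem_insert, mem_singleton, not_or] at hqp hrp
  rw [mem_filter] at hp hq hr
  have memA : ∀ {p x y : ℕ}, fib n A p = {x, y} → p * x ∈ A ∧ p * y ∈ A := by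
    intro p x y h
    constructor
    · exact (mem_fib.1 (h ▸ mem_insert_self x _ : x ∈ fib n A p)).2
    · exact (mem_fib.1 (h ▸ mem_insert_of_mem (mem_singleton_self y) : y ∈ fib n A p)).2
  obtain ⟨p1, p2⟩ := memA hp.2
  obtain ⟨q1, q2⟩ := memA hq.2
  obtain ⟨r1, r2⟩ := memA hr.2
  have hne : ∀ {s t x y : ℕ}, s ∈ bigP n D → t ∈ bigP n D → s * x ∈ A → s ≠ t → s * x ≠ t * y := by
    intro s t x y hs ht hm hst h
    have h0 := mem_Icc.1 (hAn hm)
    exact hst (bigP_uniq hD hs ht h0.1 h0.2 (Dvd.intro _ rfl) (h ▸ Dvd.intro _ rfl))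
  have hne2 : ∀ {s x y : ℕ}, s ∈ bigP n D → x ≠ y → s * x ≠ s * y := by
    intro s x y hs hxy h
    exact hxy (Nat.eq_of_mul_eq_mul_left (mem_bigP.1 hs).1.pos h)
  refine sidon_six hA p1 q1 r2 p2 q2 r1 ?_ ?_
  · have hpq : p ≠ q := fun h => hqp h.symm
    have hpr : p ≠ r := fun h => hrp.1 h.symm
    have hqr : q ≠ r := fun h => hrp.2 h.symm
    simp only [List.nodup_cons, List.mem_cons, not_or, List.not_mem_nil, not_false_eq_true,
      List.nodup_nil, and_true]
    refine ⟨⟨hne hp.1 hq.1 p1 hpq, hne hp.1 hr.1 p1 hpr, hne2 hp.1 e1.1, hne hp.1 hq.1 p1 hpq,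
      hne hp.1 hr.1 p1 hpr⟩, ⟨hne hq.1 hr.1 q1 hqr, hne hq.1 hp.1 q1 hqp, hne2 hq.1 e2.1,
      hne hq.1 hr.1 q1 hqr⟩, ⟨hne hr.1 hp.1 r2 hrp.1, hne hr.1 hq.1 r2 hrp.2, 
      hne2 hr.1 e3.1.symm⟩, ⟨hne hp.1 hq.1 p2 hpq, hne hp.1 hr.1 p2 hpr⟩, hne hq.1 hr.1 q2 hqr⟩
  · calc p * a₁ * (q * a₂) * (r * b₃) = p * q * r * (a₁ * a₂ * b₃) := by ring
      _ = p * q * r * (a₃ * (b₁ * b₂)) := by rw [he']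
      _ = _ := by ring

noncomputable def Exc (n D M : ℕ) (A : Finset ℕ) : Finset ℕ :=
  (bigP n D).filter (fun p => fib n A p ∉ Opt (hQ M (QA n D M A)) (n / p))

lemma fib_sub {n D p : ℕ} {A : Finset ℕ} (hp : p ∈ bigP n D) : fib n A p ⊆ Icc 1 D := by
  intro x hx
  have h1 := (mem_fib.1 hx).1
  have h2 := (mem_bigP.1 hp).2.2
  exact mem_Icc.2 ⟨h1.1, by omega⟩

lemma Exc_card {n D M : ℕ} (hD : D * D ≤ n) {A : Finset ℕ} (hA : MulKSidon 3 A)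
    (hAn : A ⊆ Icc 1 n) : (Exc n D M A).card ≤ 2 * D ^ 3 + 2 * M ^ 2 := by
  have h1 : ((bigP n D).filter (fun i => 3 ≤ (fib n A i).card)).card ≤ 2 * D ^ 3 := by
    have := k33 hA (bigP n D) (Icc 1 D) (fib n A) (fun p hp => fib_sub hp)
      (fun p _ x hx => (mem_fib.1 hx).2) ?_
    · simpa using this
    · intro i hi x hx j hj y hy h
      have h2 := (mem_fib.1 hx).2
      have h0 := mem_Icc.1 (hAn h2)
      have : i = j := bigP_uniq hD hi hj h0.1 h0.2 (Dvd.intro _ rfl) (h ▸ Dvd.intro _ rfl)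
      subst this
      exact ⟨rfl, Nat.eq_of_mul_eq_mul_left (mem_bigP.1 hi).1.pos h⟩
  set T := ((Icc 1 M) ×ˢ (Icc 1 M)).filter
    (fun z => ((bigP n D).filter (fun p => fib n A p = {z.1, z.2})).card ≤ 2) with hT
  have h2 : (T.biUnion (fun z => (bigP n D).filter (fun p => fib n A p = {z.1, z.2}))).card
      ≤ 2 * M ^ 2 := by
    refine (card_biUnion_le_card_mul T _ 2 (fun z hz => (mem_filter.1 hz).2)).trans ?_
    have : T.card ≤ M ^ 2 := by
      refine (card_le_card (filter_subset _ _)).trans ?_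
      simp [sq]
    omega
  refine (card_le_card ?_).trans ((card_union_le _ _).trans (Nat.add_le_add h1 h2))
  intro p hp
  obtain ⟨hp1, hp2⟩ := mem_filter.1 hp
  rw [mem_union]
  by_cases h3 : 3 ≤ (fib n A p).card
  · exact Or.inl (mem_filter.2 ⟨hp1, h3⟩)
  right
  have hsub : fib n A p ⊆ Icc 1 (n / p) := filter_subset _ _
  rw [mem_Opt] at hp2
  push Not at hp2
  have hp2 := hp2 hsub
  obtain ⟨x, y, hxy, he⟩ := card_eq_two.1 (by omega : (fib n A p).card = 2)
  have hx : x ∈ Icc 1 (n / p) := hsub (by rw [he]; simp)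
  have hy : y ∈ Icc 1 (n / p) := hsub (by rw [he]; simp)
  rw [mem_Icc] at hx hy
  have hna : ¬ (hQ M (QA n D M A)).Adj x y := fun h => hp2.2 x y h he
  have h4 : x ≤ M ∧ y ≤ M ∧ ¬ ((x, y) ∈ QA n D M A ∧ (y, x) ∈ QA n D M A) := by
    by_contra h
    exact hna ⟨hxy, fun h1 h2 => by tauto⟩
  obtain ⟨hxM, hyM, h5⟩ := h4
  rw [mem_biUnion]
  refine ⟨(x, y), ?_, mem_filter.2 ⟨hp1, he⟩⟩
  rw [hT, mem_filter]
  refine ⟨mem_product.2 ⟨mem_Icc.2 ⟨hx.1, hxM⟩, mem_Icc.2 ⟨hy.1, hyM⟩⟩, ?_⟩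
  by_contra h6
  apply h5
  have h7 : 3 ≤ ((bigP n D).filter (fun p => fib n A p = {x, y})).card := by
    simp only at h6; omega
  refine ⟨mem_filter.2 ⟨mem_product.2 ⟨mem_Icc.2 ⟨hx.1, hxM⟩, mem_Icc.2 ⟨hy.1, hyM⟩⟩, h7⟩,
    mem_filter.2 ⟨mem_product.2 ⟨mem_Icc.2 ⟨hy.1, hyM⟩, mem_Icc.2 ⟨hx.1, hxM⟩⟩, ?_⟩⟩
  simp only
  rw [pair_comm y x]
  exact h7

noncomputable def Rare (n D M : ℕ) (A : Finset ℕ) : Finset ℕ :=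
  A.filter (fun a => ∀ p ∈ bigP n D, ¬ p ∣ a) ∪ A.filter (fun a => ∃ p ∈ Exc n D M A, p ∣ a)

lemma Rare_card {n D M E : ℕ} (hD : D * D ≤ n) {A : Finset ℕ} (hA : MulKSidon 3 A)
    (hAn : A ⊆ Icc 1 n) (hE : (A.filter (fun a => ∀ p ∈ bigP n D, ¬ p ∣ a)).card ≤ E) :
    (Rare n D M A).card ≤ E + (2 * D ^ 3 + 2 * M ^ 2) * D := by
  refine (card_union_le _ _).trans (Nat.add_le_add hE ?_)
  have h1 : A.filter (fun a => ∃ p ∈ Exc n D M A, p ∣ a) ⊆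
      (Exc n D M A).biUnion (fun p => (fib n A p).image (fun x => p * x)) := by
    intro a ha
    obtain ⟨ha, p, hp, x, rfl⟩ := mem_filter.1 ha
    rw [mem_biUnion]
    refine ⟨p, hp, mem_image.2 ⟨x, fib_of_mul hAn ?_ ha, rfl⟩⟩
    exact (mem_bigP.1 (mem_filter.1 hp).1).1.pos
  refine (card_le_card h1).trans ?_
  refine (card_biUnion_le_card_mul _ _ D ?_).trans (Nat.mul_le_mul_right _ (Exc_card hD hA hAn))
  intro p hp
  refine card_image_le.trans ((card_le_card (fib_sub (mem_filter.1 hp).1)).trans ?_)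
  simp

lemma Reg_mem {n D M : ℕ} (hD : D * D ≤ n) {A : Finset ℕ} (hAn : A ⊆ Icc 1 n) :
    A \ Rare n D M A ∈ Reg n D (hQ M (QA n D M A)) := by
  refine mem_filter.2 ⟨mem_powerset.2 (sdiff_subset.trans hAn), ?_, ?_⟩
  · intro a ha
    obtain ⟨h1, h2⟩ := mem_sdiff.1 ha
    by_contra h
    push Not at h
    exact h2 (mem_union_left _ (mem_filter.2 ⟨h1, h⟩))
  · intro p hp
    by_cases hX : p ∈ Exc n D M A
    · have : fib n (A \ Rare n D M A) p = ∅ := by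
        rw [eq_empty_iff_forall_notMem]
        intro x hx
        obtain ⟨h1, h2⟩ := mem_sdiff.1 (mem_fib.1 hx).2
        exact h2 (mem_union_right _ (mem_filter.2 ⟨h1, p, hX, Dvd.intro _ rfl⟩))
      rw [this, mem_Opt]
      simp
    · have : fib n (A \ Rare n D M A) p = fib n A p := by
        ext x
        rw [mem_fib, mem_fib, mem_sdiff]
        refine and_congr_right fun _ => ⟨fun h => h.1, fun h => ⟨h, fun h' => ?_⟩⟩
        rcases mem_union.1 h' with h1 | h1
        · exact (mem_filter.1 h1).2 p hp (Dvd.intro _ rfl)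
        · obtain ⟨_, q, hq, hd⟩ := mem_filter.1 h1
          have h0 := mem_Icc.1 (hAn h)
          have := bigP_uniq hD hp (mem_filter.1 hq).1 h0.1 h0.2 (Dvd.intro _ rfl) hd
          exact hX (this ▸ hq)
      rw [this]
      by_contra h
      exact hX (mem_filter.2 ⟨hp, h⟩)

lemma card_small (n E : ℕ) :
    ((Icc 1 n).powerset.filter (fun S => S.card ≤ E)).card ≤ (n + 1) ^ E := by
  induction E with
  | zero =>
    have : (Icc 1 n).powerset.filter (fun S => S.card ≤ 0) ⊆ {∅} := by
      intro S hS
      have := (mem_filter.1 hS).2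
      simpa using this
    simpa using card_le_card this
  | succ E ih =>
    have : (Icc 1 n).powerset.filter (fun S => S.card ≤ E + 1) ⊆
      ((range (n + 1)) ×ˢ ((Icc 1 n).powerset.filter (fun S => S.card ≤ E))).image
        (fun z => (insert z.1 z.2).erase 0) := by
      intro S hS
      obtain ⟨h1, h2⟩ := mem_filter.1 hS
      rw [mem_powerset] at h1
      rw [mem_image]
      have h0 : 0 ∉ S := fun h => by simpa using h1 h
      rcases S.eq_empty_or_nonempty with rfl | ⟨x, hx⟩
      · exact ⟨(0, ∅), by simp, by simp⟩
      · refine ⟨(x, S.erase x), ?_, ?_⟩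
        · rw [mem_product, mem_filter, mem_powerset]
          have := mem_Icc.1 (h1 hx)
          refine ⟨mem_range.2 (by simp; omega), (erase_subset _ _).trans h1, ?_⟩
          rw [card_erase_of_mem hx]; omega
        · simp only [insert_erase hx]
          exact erase_eq_of_notMem h0
    refine (card_le_card this).trans (card_image_le.trans ?_)
    rw [card_product, card_range, pow_succ, mul_comm]
    exact Nat.mul_le_mul_right _ ih

noncomputable def PF (M : ℕ) : Finset (Finset (ℕ × ℕ)) :=
  ((Icc 1 M) ×ˢ (Icc 1 M)).powerset.filter (fun Q => ProductFree (gQ Q))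

lemma Sk_upper {n B D : ℕ} (M : ℕ) (hB : 1 ≤ B) (hD1 : 1 ≤ D) (hBD : B * B * D ≤ n)
    (hD : D * D ≤ n) :
    Sk 3 n ≤ (n + 1) ^ (B + ∑ j ∈ Icc 1 (n / (D * B)), (2 * (n / (j * B)) + 2 * B ^ 4)
        + (2 * D ^ 3 + 2 * M ^ 2) * D) *
      ∑ Q ∈ PF M, ∏ p ∈ bigP n D, (eOn (hQ M Q) (n / p) + (n / p) + 1) := by
  set E := B + ∑ j ∈ Icc 1 (n / (D * B)), (2 * (n / (j * B)) + 2 * B ^ 4)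
        + (2 * D ^ 3 + 2 * M ^ 2) * D with hE
  have hsub : (Icc 1 n).powerset.filter (fun A => MulKSidon 3 A) ⊆
      (((Icc 1 n).powerset.filter (fun S => S.card ≤ E)) ×ˢ
        ((PF M).biUnion (fun Q => Reg n D (hQ M Q)))).image (fun z => z.1 ∪ z.2) := by
    intro A hA
    obtain ⟨hAn, hA⟩ := mem_filter.1 hA
    rw [mem_powerset] at hAn
    have hR : Rare n D M A ⊆ A := union_subset (filter_subset _ _) (filter_subset _ _)
    rw [mem_image]
    refine ⟨(Rare n D M A, A \ Rare n D M A), ?_, union_sdiff_of_subset hR⟩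
    rw [mem_product, mem_filter, mem_powerset, mem_biUnion]
    refine ⟨⟨hR.trans hAn, Rare_card hD hA hAn (small_bound hB hD1 hBD hA hAn)⟩,
      QA n D M A, ?_, Reg_mem hD hAn⟩
    exact mem_filter.2 ⟨mem_powerset.2 (filter_subset _ _), QA_pf hD hA hAn⟩
  refine (card_le_card hsub).trans (card_image_le.trans ?_)
  rw [card_product]
  refine Nat.mul_le_mul (card_small n E) (card_biUnion_le.trans ?_)
  exact sum_le_sum fun Q _ => card_Reg_le n D _

end Cnt

end

section

namespace Cnt
open Finset Filter Topology

noncomputable def F (G : SimpleGraph ℕ) (m : ℕ) : ℝ := Real.log ((eOn G m : ℝ) + m + 1)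

lemma eOn_le (G : SimpleGraph ℕ) (m : ℕ) : eOn G m ≤ m * m := by
  refine (card_le_card (filter_subset _ _)).trans ?_
  simp

lemma F_nonneg (G : SimpleGraph ℕ) (m : ℕ) : 0 ≤ F G m := by
  apply Real.log_nonneg
  have : (0:ℝ) ≤ eOn G m := by positivity
  have : (0:ℝ) ≤ m := by positivity
  linarith

lemma F_le (G : SimpleGraph ℕ) (m : ℕ) : F G m ≤ 2 * Real.log (m + 1) := by
  have h1 : (eOn G m : ℝ) ≤ m * m := by exact_mod_cast eOn_le G m
  have h2 : (0:ℝ) ≤ eOn G m := by positivity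
  have h3 : (0:ℝ) ≤ m := by positivity
  have : 2 * Real.log ((m:ℝ) + 1) = Real.log (((m:ℝ) + 1) ^ 2) := by
    rw [Real.log_pow]; norm_num
  rw [this]
  apply Real.log_le_log
  · linarith
  · nlinarith

noncomputable def t (G : SimpleGraph ℕ) (m : ℕ) : ℝ :=
  F G (m + 1) * ((1 : ℝ) / (((m : ℝ) + 1) ^ 2 + ((m : ℝ) + 1)))

noncomputable def sB (m : ℕ) : ℝ := 4 * ((m + 1 : ℕ) : ℝ) ^ (-(3 / 2) : ℝ)

lemma sB_summable : Summable sB := by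
  unfold sB
  apply Summable.mul_left
  exact (summable_nat_add_iff 1).2 (Real.summable_nat_rpow.2 (by norm_num))

lemma t_nonneg (G : SimpleGraph ℕ) (m : ℕ) : 0 ≤ t G m := by
  have := F_nonneg G (m + 1)
  unfold t; positivity

lemma t_le (G : SimpleGraph ℕ) (m : ℕ) : t G m ≤ sB m := by
  unfold t sB
  have hF := F_le G (m + 1)
  push_cast at hF ⊢
  set x : ℝ := (m : ℝ) + 1 with hx
  have hx0 : 0 < x := by positivity
  have h1 : Real.log (x + 1) ≤ 2 * x ^ (1 / 2 : ℝ) := by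
    have h2 : Real.log (x + 1) = 2 * Real.log ((x + 1) ^ (1 / 2 : ℝ)) := by
      rw [Real.log_rpow (by positivity)]; ring
    rw [h2]
    have h3 := Real.log_le_sub_one_of_pos (show 0 < (x + 1) ^ (1 / 2 : ℝ) by positivity)
    have h4 : (x + 1) ^ (1 / 2 : ℝ) ≤ x ^ (1 / 2 : ℝ) + 1 ^ (1 / 2 : ℝ) :=
      Real.rpow_add_le_add_rpow hx0.le zero_le_one (by norm_num) (by norm_num)
    rw [Real.one_rpow] at h4
    linarith
  have h5 : x ^ (-(3 / 2) : ℝ) = x ^ (1 / 2 : ℝ) * (1 / x ^ 2) := by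
    rw [one_div (x ^ 2), ← Real.rpow_natCast, ← Real.rpow_neg hx0.le, ← Real.rpow_add hx0]
    norm_num
  rw [h5, ← mul_assoc]
  apply mul_le_mul
  · linarith
  · apply one_div_le_one_div_of_le (by positivity); linarith
  · positivity
  · positivity

lemma t_summable (G : SimpleGraph ℕ) : Summable (t G) :=
  Summable.of_nonneg_of_le (t_nonneg G) (t_le G) sB_summable

lemma gProd_eq (G : SimpleGraph ℕ) : gProd G = Real.exp (∑' m, t G m) := by
  have h := (t_summable G).hasSum.rexp
  rw [← h.tprod_eq]
  unfold gProd
  congr 1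
  funext m
  have h2 : (0:ℝ) < (eOn G (m + 1) : ℝ) + (m + 1) + 1 := by positivity
  rw [Real.rpow_def_of_pos h2]
  simp only [Function.comp, t, F]
  push_cast
  rfl

lemma bdd : BddAbove {x : ℝ | ∃ G : SimpleGraph ℕ, ProductFree G ∧ x = gProd G} := by
  refine ⟨Real.exp (∑' m, sB m), ?_⟩
  rintro x ⟨G, _, rfl⟩
  rw [gProd_eq]
  exact Real.exp_le_exp.2 ((t_summable G).tsum_le_tsum (t_le G) sB_summable)

lemma pf_bot : ProductFree ⊥ := by
  refine ⟨fun a b h => h.elim, ?_⟩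
  intro a b c d e f h
  exact h.elim

lemma gProd_le_beta {G : SimpleGraph ℕ} (hG : ProductFree G) : gProd G ≤ beta :=
  le_csSup bdd ⟨G, hG, rfl⟩

lemma beta_pos : 0 < beta := by
  refine lt_of_lt_of_le ?_ (gProd_le_beta pf_bot)
  rw [gProd_eq]; positivity

lemma sum_t_le {G : SimpleGraph ℕ} (hG : ProductFree G) (M : ℕ) :
    ∑ m ∈ range M, t G m ≤ Real.log beta := by
  rw [Real.le_log_iff_exp_le beta_pos]
  refine le_trans ?_ (gProd_le_beta hG)
  rw [gProd_eq]
  exact Real.exp_le_exp.2 ((t_summable G).sum_le_tsum _ (fun m _ => t_nonneg G m))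

lemma pc_eq (k : ℕ) : Nat.primeCounting k = ((Icc 1 k).filter Nat.Prime).card := by
  rw [Nat.primeCounting, Nat.primeCounting', Nat.count_eq_card_filter_range]
  congr 1
  ext p
  simp only [mem_filter, mem_range, mem_Icc]
  constructor
  · rintro ⟨h1, h2⟩; exact ⟨⟨h2.one_lt.le, by omega⟩, h2⟩
  · rintro ⟨h1, h2⟩; exact ⟨by omega, h2⟩

lemma cnt_ge (n D j : ℕ) (hj : 1 ≤ j) :
    ((bigP n D).filter (fun p => j ≤ n / p)).card ≤ Nat.primeCounting (n / j) := by
  rw [pc_eq]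
  apply card_le_card
  intro p hp
  obtain ⟨h1, h2⟩ := mem_filter.1 hp
  obtain ⟨hp1, hp2, hp3⟩ := mem_bigP.1 h1
  refine mem_filter.2 ⟨mem_Icc.2 ⟨hp1.one_lt.le, ?_⟩, hp1⟩
  rw [Nat.le_div_iff_mul_le hp1.pos] at h2
  rw [Nat.le_div_iff_mul_le hj, mul_comm]; exact h2

lemma cnt_eq (n M m : ℕ) (hm : m < M) :
    (((bigP n (M + 1)).filter (fun p => n / p - 1 = m)).card : ℝ) =
      Nat.primeCounting (n / (m + 1)) - Nat.primeCounting (n / (m + 2)) := by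
  have hsub : (Icc 1 (n / (m + 2))).filter Nat.Prime ⊆ (Icc 1 (n / (m + 1))).filter Nat.Prime := by
    apply filter_subset_filter
    apply Icc_subset_Icc_right
    exact Nat.div_le_div_left (by omega) (by omega)
  have : (bigP n (M + 1)).filter (fun p => n / p - 1 = m) =
      (Icc 1 (n / (m + 1))).filter Nat.Prime \ (Icc 1 (n / (m + 2))).filter Nat.Prime := by
    ext p
    simp only [mem_filter, Finset.mem_sdiff, mem_bigP, mem_Icc]
    by_cases hp : p.Prime
    · have hp0 := hp.pos
      have e1 : p ≤ n / (m + 1) ↔ m + 1 ≤ n / p := by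
        rw [Nat.le_div_iff_mul_le (by omega), Nat.le_div_iff_mul_le hp0, mul_comm]
      have e2 : p ≤ n / (m + 2) ↔ m + 2 ≤ n / p := by
        rw [Nat.le_div_iff_mul_le (by omega), Nat.le_div_iff_mul_le hp0, mul_comm]
      have e3 : p ≤ n ↔ 1 ≤ n / p := by
        rw [Nat.le_div_iff_mul_le hp0, one_mul]
      rw [e1, e2, e3]
      simp only [hp, true_and, and_true]
      omega
    · simp [hp]
  rw [this, card_sdiff_of_subset hsub, Nat.cast_sub (card_le_card hsub), pc_eq, pc_eq]

lemma main_lim (G : SimpleGraph ℕ) (M : ℕ) :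
    Tendsto (fun n : ℕ => (∑ p ∈ bigP n (M + 1), F G (n / p)) / Nat.primeCounting n) atTop
      (𝓝 (∑ m ∈ range M, t G m)) := by
  have h : ∀ n : ℕ, (∑ p ∈ bigP n (M + 1), F G (n / p)) / Nat.primeCounting n =
      ∑ m ∈ range M, F G (m + 1) * ((Nat.primeCounting (n / (m + 1)) : ℝ) / Nat.primeCounting n -
        (Nat.primeCounting (n / (m + 2)) : ℝ) / Nat.primeCounting n) := by
    intro n
    rw [← sum_fiberwise_of_maps_to (t := range M) (g := fun p => n / p - 1), sum_div]
    · apply sum_congr rfl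
      intro m hm
      have : ∑ p ∈ (bigP n (M + 1)).filter (fun p => n / p - 1 = m), F G (n / p) =
          ∑ p ∈ (bigP n (M + 1)).filter (fun p => n / p - 1 = m), F G (m + 1) := by
        apply sum_congr rfl
        intro p hp
        obtain ⟨h1, h2⟩ := mem_filter.1 hp
        obtain ⟨hp1, hp2, hp3⟩ := mem_bigP.1 h1
        have : 1 ≤ n / p := by rwa [Nat.le_div_iff_mul_le hp1.pos, one_mul]
        congr 1; omega
      rw [this, sum_const, nsmul_eq_mul, cnt_eq n M m (mem_range.1 hm)]
      ring
    · intro p hp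
      obtain ⟨hp1, hp2, hp3⟩ := mem_bigP.1 hp
      have : 1 ≤ n / p := by rwa [Nat.le_div_iff_mul_le hp1.pos, one_mul]
      rw [mem_range]; omega
  simp_rw [h]
  apply tendsto_finsetSum
  intro m _
  unfold t
  apply Tendsto.const_mul
  have h1 := (PNT.pi_ratio (m + 1) (by omega)).sub (PNT.pi_ratio (m + 2) (by omega))
  convert h1 using 2
  push_cast
  field_simp
  ring

lemma log_split (M m : ℕ) (h : M ≤ m) :
    Real.log (m + 1) ≤ Real.log (M + 1) + ∑ j ∈ Ioc M m, (1 : ℝ) / j := by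
  induction m, h using Nat.le_induction with
  | base => simp
  | succ m hm ih =>
    rw [← insert_Ioc_right_eq_Ioc_add_one hm, sum_insert (by simp)]
    have h1 : Real.log ((m:ℝ) + 1 + 1) - Real.log ((m:ℝ) + 1) ≤ 1 / ((m:ℝ) + 1) := by
      rw [← Real.log_div (by positivity) (by positivity)]
      refine (Real.log_le_sub_one_of_pos (by positivity)).trans (le_of_eq ?_)
      field_simp; ring
    push_cast
    linarith

noncomputable def Tl (M : ℕ) : ℝ := 10 * Real.log (M + 1) / (M + 1) + 20 / (M + 1)

lemma tail {M n D : ℕ} (G : SimpleGraph ℕ) (hMD : M + 1 ≤ D)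
    (hc : ∀ j : ℕ, 1 ≤ j → j ≤ D →
      (Nat.primeCounting (n / j) : ℝ) ≤ 5 * Nat.primeCounting n / j) :
    ∑ p ∈ bigP n D, F G (n / p) ≤ ∑ p ∈ bigP n (M + 1), F G (n / p) + Tl M * Nat.primeCounting n := by
  rw [← sum_filter_add_sum_filter_not (bigP n D) (fun p => n / p < M + 1)]
  have e1 : (bigP n D).filter (fun p => n / p < M + 1) = bigP n (M + 1) := by
    ext p
    simp only [mem_filter, mem_bigP]
    constructor
    · rintro ⟨⟨h1, h2, h3⟩, h4⟩; exact ⟨h1, h2, h4⟩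
    · rintro ⟨h1, h2, h3⟩; exact ⟨⟨h1, h2, by omega⟩, h3⟩
  rw [e1]
  gcongr
  set W := (bigP n D).filter (fun p => ¬ n / p < M + 1) with hW
  have hW1 : ∀ p ∈ W, M + 1 ≤ n / p ∧ n / p < D := by
    intro p hp
    obtain ⟨h1, h2⟩ := mem_filter.1 hp
    exact ⟨by omega, (mem_bigP.1 h1).2.2⟩
  have hWc : (W.card : ℝ) ≤ 5 * Nat.primeCounting n / ((M + 1 : ℕ) : ℝ) := by
    refine le_trans ?_ (hc (M + 1) (by omega) hMD)
    have := cnt_ge n D (M + 1) (by omega)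
    rw [hW]
    push Not
    exact_mod_cast this
  have step : ∀ p ∈ W, F G (n / p) ≤ 2 * Real.log (M + 1) +
      2 * ∑ j ∈ Ioo M D, (if j ≤ n / p then (1:ℝ) / j else 0) := by
    intro p hp
    obtain ⟨h1, h2⟩ := hW1 p hp
    refine (F_le G _).trans ?_
    have h3 := log_split M (n / p) (by omega)
    have h4 : ∑ j ∈ Ioo M D, (if j ≤ n / p then (1:ℝ) / j else 0) =
        ∑ j ∈ Ioc M (n / p), (1 : ℝ) / j := by
      rw [← sum_filter]
      apply sum_congr _ (fun _ _ => rfl)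
      ext j
      simp only [mem_filter, mem_Ioo, mem_Ioc]
      omega
    rw [h4]
    linarith
  refine (sum_le_sum step).trans ?_
  rw [sum_add_distrib, sum_const, nsmul_eq_mul, ← mul_sum, sum_comm]
  have h5 : ∀ j ∈ Ioo M D, ∑ p ∈ W, (if j ≤ n / p then (1:ℝ) / j else 0) ≤
      5 * Nat.primeCounting n * ((j:ℝ) ^ 2)⁻¹ := by
    intro j hj
    rw [mem_Ioo] at hj
    have hj0 : (0:ℝ) < j := by exact_mod_cast (by omega : 0 < j)
    rw [← sum_filter, sum_const, nsmul_eq_mul]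
    have h6 : ((W.filter (fun p => j ≤ n / p)).card : ℝ) ≤ 5 * Nat.primeCounting n / j := by
      refine le_trans ?_ (hc j (by omega) (by omega))
      have : (W.filter (fun p => j ≤ n / p)).card ≤ Nat.primeCounting (n / j) :=
        (card_le_card (filter_subset_filter _ (filter_subset _ _))).trans (cnt_ge n D j (by omega))
      exact_mod_cast this
    calc _ ≤ (5 * Nat.primeCounting n / j : ℝ) * (1 / j) := by gcongr
      _ = _ := by field_simp
  have h7 := sum_le_sum h5
  rw [← mul_sum] at h7
  have h8 : ∑ i ∈ Ioo M D, ((i:ℝ) ^ 2)⁻¹ ≤ 2 / ((M:ℝ) + 1) := sum_Ioo_inv_sq_le M D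
  have hlog : 0 ≤ Real.log ((M:ℝ) + 1) := Real.log_nonneg (by linarith [Nat.cast_nonneg (α := ℝ) M])
  have hpi : (0:ℝ) ≤ Nat.primeCounting n := by positivity
  push_cast at hWc
  calc _ ≤ (5 * Nat.primeCounting n / ((M:ℝ) + 1)) * (2 * Real.log (M + 1)) +
        2 * (5 * Nat.primeCounting n * (2 / ((M:ℝ) + 1))) := by
        refine add_le_add (by gcongr) ?_
        have : (5 * Nat.primeCounting n : ℝ) * ∑ i ∈ Ioo M D, ((i:ℝ) ^ 2)⁻¹ ≤
          5 * Nat.primeCounting n * (2 / ((M:ℝ) + 1)) := by gcongr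
        linarith
    _ = _ := by unfold Tl; ring

lemma Tl_tendsto : Tendsto Tl atTop (𝓝 0) := by
  have h1 : Tendsto (fun M : ℕ => (M : ℝ) + 1) atTop atTop :=
    tendsto_atTop_add_const_right _ _ tendsto_natCast_atTop_atTop
  have h2 : Tendsto (fun x : ℝ => Real.log x / x) atTop (𝓝 0) := by
    have := Real.isLittleO_log_id_atTop.tendsto_div_nhds_zero
    simpa using this
  have h3 := ((h2.comp h1).const_mul 10).add ((tendsto_inv_atTop_zero.comp h1).const_mul 20)
  simp only [mul_zero, add_zero] at h3
  refine h3.congr fun M => ?_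
  simp only [Function.comp, Tl]
  ring

end Cnt

end

section

namespace Cnt
open Finset Filter Topology

noncomputable def Bn (n : ℕ) : ℕ := ⌊(n : ℝ) ^ (1 / 100 : ℝ)⌋₊

lemma Bn_pow (n : ℕ) : (Bn n) ^ 100 ≤ n := by
  have h : ((Bn n : ℝ)) ≤ (n : ℝ) ^ (1 / 100 : ℝ) := Nat.floor_le (by positivity)
  have h2 : (Bn n : ℝ) ^ 100 ≤ n := by
    calc (Bn n : ℝ) ^ 100 ≤ ((n : ℝ) ^ (1 / 100 : ℝ)) ^ 100 := by gcongr
      _ = (n : ℝ) := by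
        rw [← Real.rpow_natCast, ← Real.rpow_mul (by positivity)]; norm_num
  exact_mod_cast h2

lemma Bn_pos {n : ℕ} (hn : 1 ≤ n) : 1 ≤ Bn n := by
  unfold Bn
  rw [Nat.one_le_floor_iff]
  exact Real.one_le_rpow (by exact_mod_cast hn) (by norm_num)

lemma Bn_lower {n : ℕ} (hn : 1 ≤ n) : (n : ℝ) ^ (1 / 100 : ℝ) ≤ 2 * Bn n := by
  have h := Nat.lt_floor_add_one ((n : ℝ) ^ (1 / 100 : ℝ))
  have h2 : (1:ℝ) ≤ Bn n := by exact_mod_cast Bn_pos hn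
  unfold Bn at *
  linarith

lemma Bn_le_pow {n : ℕ} (hn : 1 ≤ n) (k : ℕ) (hk : k ≤ 100) : (Bn n) ^ k ≤ n :=
  (Nat.pow_le_pow_right (Bn_pos hn) hk).trans (Bn_pow n)

noncomputable def En (M n : ℕ) : ℕ :=
  Bn n + ∑ j ∈ Icc 1 (n / ((Bn n) ^ 5 * Bn n)), (2 * (n / (j * Bn n)) + 2 * (Bn n) ^ 4)
        + (2 * ((Bn n) ^ 5) ^ 3 + 2 * M ^ 2) * (Bn n) ^ 5

lemma harm (K n : ℕ) (h : K ≤ n) : ∑ j ∈ Icc 1 K, (1 : ℝ) / j ≤ 1 + Real.log n := by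
  have h1 : ∑ j ∈ Icc 1 K, (1 : ℝ) / j ≤ ∑ j ∈ Icc 1 n, (1 : ℝ) / j :=
    sum_le_sum_of_subset_of_nonneg (Icc_subset_Icc_right h) (fun _ _ _ => by positivity)
  refine h1.trans ?_
  have h2 := harmonic_le_one_add_log n
  rw [harmonic_eq_sum_Icc] at h2
  push_cast at h2
  simpa using h2

lemma En_le (M n : ℕ) (hn : 1 ≤ n) :
    (En M n : ℝ) ≤ n / Bn n * (7 + 2 * M ^ 2 + 2 * Real.log n) := by
  have hB1 := Bn_pos hn
  have hb : (1:ℝ) ≤ Bn n := by exact_mod_cast hB1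
  have key : ∀ k : ℕ, k ≤ 99 → (Bn n : ℝ) ^ k ≤ n / Bn n := by
    intro k hk
    rw [le_div_iff₀ (by linarith), ← pow_succ]
    exact_mod_cast Bn_le_pow hn (k + 1) (by omega)
  have hsum : ((∑ j ∈ Icc 1 (n / ((Bn n) ^ 5 * Bn n)), (2 * (n / (j * Bn n)) + 2 * (Bn n) ^ 4) : ℕ) : ℝ)
      ≤ n / Bn n * (4 + 2 * Real.log n) := by
    set b := Bn n with hbdef
    set K := n / (b ^ 5 * b) with hK
    have hKn : K ≤ n := Nat.div_le_self _ _
    have hKr : (K : ℝ) ≤ n / (b ^ 5 * b) := by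
      have := @Nat.cast_div_le ℝ _ _ _ n (b ^ 5 * b)
      push_cast at this
      exact this
    push_cast
    calc ∑ j ∈ Icc 1 K, (2 * ((n / (j * b) : ℕ) : ℝ) + 2 * (b : ℝ) ^ 4)
        ≤ ∑ j ∈ Icc 1 K, (2 * n / b * (1 / (j : ℝ)) + 2 * (b : ℝ) ^ 4) := by
          apply sum_le_sum
          intro j _
          have := @Nat.cast_div_le ℝ _ _ _ n (j * b)
          push_cast at this
          have e : 2 * (n : ℝ) / b * (1 / (j : ℝ)) = 2 * (n / (j * b)) := by
            rw [div_mul_div_comm, mul_one, mul_comm (b:ℝ), mul_div_assoc]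
          rw [e]; linarith
      _ = 2 * n / b * ∑ j ∈ Icc 1 K, (1 / (j : ℝ)) + K * (2 * (b : ℝ) ^ 4) := by
          rw [sum_add_distrib, ← mul_sum, sum_const]; simp
      _ ≤ 2 * n / b * (1 + Real.log n) + (n / (b ^ 5 * b)) * (2 * (b : ℝ) ^ 4) := by
          gcongr
          exact harm K n hKn
      _ ≤ 2 * n / b * (1 + Real.log n) + 2 * (n / b) := by
          refine add_le_add le_rfl ?_
          have e : (n:ℝ) / (b ^ 5 * b) * (2 * b ^ 4) = 2 * (n / (b * b)) := by
            have : (b:ℝ) ≠ 0 := by linarith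
            field_simp
          rw [e]
          gcongr
          nlinarith
      _ = _ := by ring
  unfold En
  rw [Nat.cast_add, Nat.cast_add]
  push_cast at hsum ⊢
  have k1 := key 1 (by norm_num)
  have k2 := key 20 (by norm_num)
  have k3 := key 5 (by norm_num)
  have k4 : (M:ℝ) ^ 2 * (Bn n : ℝ) ^ 5 ≤ M ^ 2 * (n / Bn n) := by gcongr
  rw [pow_one] at k1
  have e : (2 * (((Bn n : ℝ)) ^ 5) ^ 3 + 2 * (M:ℝ) ^ 2) * (Bn n : ℝ) ^ 5 =
    2 * (Bn n : ℝ) ^ 20 + 2 * (M ^ 2 * (Bn n : ℝ) ^ 5) := by ring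
  rw [e]
  linarith

lemma En_lim (M : ℕ) : Tendsto (fun n : ℕ => (En M n : ℝ) * Real.log (n + 1) / Nat.primeCounting n)
    atTop (𝓝 0) := by
  set C : ℝ := 9 + 2 * (M:ℝ) ^ 2 with hC
  have hlim : Tendsto (fun n : ℕ => 8 * C * (Real.log n ^ (3:ℝ) / (n:ℝ) ^ (1 / 100 : ℝ))) atTop (𝓝 0) := by
    have := (isLittleO_log_rpow_rpow_atTop 3 (show (0:ℝ) < 1 / 100 by norm_num)).tendsto_div_nhds_zero
    have := (this.comp tendsto_natCast_atTop_atTop).const_mul (8 * C)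
    simpa [Function.comp_def] using this
  refine squeeze_zero' ?_ ?_ hlim
  · filter_upwards with n
    have : 0 ≤ Real.log ((n:ℝ) + 1) := Real.log_nonneg (by linarith [Nat.cast_nonneg (α := ℝ) n])
    positivity
  · filter_upwards [PNT.pi_lower, eventually_ge_atTop 3] with n hpi hn
    have hn1 : 1 ≤ n := by omega
    have hnr : (3:ℝ) ≤ n := by exact_mod_cast hn
    set l := Real.log n with hl
    have hl1 : 1 ≤ l := by
      rw [hl, Real.le_log_iff_exp_le (by linarith)]
      linarith [Real.exp_one_lt_d9]
    have hln : Real.log ((n:ℝ) + 1) ≤ 2 * l := by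
      have : 2 * l = Real.log ((n:ℝ) ^ 2) := by rw [Real.log_pow, hl]; norm_num
      rw [this]
      apply Real.log_le_log (by linarith)
      nlinarith
    have hln0 : 0 ≤ Real.log ((n:ℝ) + 1) := Real.log_nonneg (by linarith)
    have hE := En_le M n hn1
    have hb : (1:ℝ) ≤ Bn n := by exact_mod_cast Bn_pos hn1
    have hbl := Bn_lower hn1
    have hx : 0 < (n : ℝ) ^ (1 / 100 : ℝ) := by positivity
    set x := (n : ℝ) ^ (1 / 100 : ℝ) with hxdef
    have hE2 : (En M n : ℝ) ≤ n * (2 / x) * (C * l) := by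
      refine hE.trans ?_
      have : (n : ℝ) / Bn n ≤ n * (2 / x) := by
        rw [div_eq_mul_inv]
        gcongr
        rw [inv_le_comm₀ (by linarith) (by positivity), inv_div]
        linarith
      have h2 : 7 + 2 * (M:ℝ) ^ 2 + 2 * l ≤ C * l := by
        have : 0 ≤ (M:ℝ) ^ 2 := by positivity
        rw [hC]; nlinarith
      gcongr
    have hpi0 : (0:ℝ) < n / (2 * l) := by positivity
    calc (En M n : ℝ) * Real.log (n + 1) / Nat.primeCounting n
        ≤ (n * (2 / x) * (C * l)) * (2 * l) / (n / (2 * l)) := by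
          have hC0 : 0 ≤ C := by positivity
          gcongr
      _ = _ := by
        have : l ^ (3:ℝ) = l ^ 3 := by exact_mod_cast Real.rpow_natCast l 3
        rw [this]
        field_simp
        ring

lemma prod_eq_exp (n D : ℕ) (G : SimpleGraph ℕ) :
    ((∏ p ∈ bigP n D, (eOn G (n / p) + (n / p) + 1) : ℕ) : ℝ) =
      Real.exp (∑ p ∈ bigP n D, F G (n / p)) := by
  rw [Real.exp_sum]
  push_cast
  apply prod_congr rfl
  intro p _
  rw [F, Real.exp_log (by positivity)]

lemma pc_pos : ∀ᶠ n : ℕ in atTop, (0:ℝ) < Nat.primeCounting n := by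
  filter_upwards [PNT.pi_lower, eventually_ge_atTop 3] with n h hn
  have hnr : (3:ℝ) ≤ n := by exact_mod_cast hn
  have : 0 < Real.log n := Real.log_pos (by linarith)
  exact lt_of_lt_of_le (by positivity) h

lemma exp_root {x a : ℝ} (hx : 0 < x) : Real.exp a ^ ((1:ℝ) / x) = Real.exp (a / x) := by
  rw [← Real.exp_mul]; congr 1; ring

lemma lower {c : ℝ} (hc : c < beta) :
    ∀ᶠ n : ℕ in atTop, c < (Sk 3 n : ℝ) ^ ((1 : ℝ) / (Nat.primeCounting n : ℝ)) := by
  obtain ⟨_, ⟨G, hG, rfl⟩, hcG⟩ := exists_lt_of_lt_csSup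
    (s := {x : ℝ | ∃ G : SimpleGraph ℕ, ProductFree G ∧ x = gProd G}) ⟨_, ⊥, pf_bot, rfl⟩ hc
  rw [gProd_eq] at hcG
  have h1 : Tendsto (fun M => Real.exp (∑ m ∈ range M, t G m)) atTop
      (𝓝 (Real.exp (∑' m, t G m))) :=
    (Real.continuous_exp.tendsto _).comp (t_summable G).hasSum.tendsto_sum_nat
  obtain ⟨M, hM⟩ := (h1.eventually_const_lt hcG).exists
  have h2 := ((Real.continuous_exp.tendsto _).comp (main_lim G M)).eventually_const_lt hM
  filter_upwards [h2, pc_pos, eventually_ge_atTop ((M + 1) * (M + 1))] with n h3 h4 h5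
  refine lt_of_lt_of_le h3 ?_
  simp only [Function.comp]
  rw [← exp_root h4, ← prod_eq_exp]
  apply Real.rpow_le_rpow (by positivity) _ (by positivity)
  exact_mod_cast Sk_lower h5 hG

lemma upper {c : ℝ} (hc : beta < c) :
    ∀ᶠ n : ℕ in atTop, (Sk 3 n : ℝ) ^ ((1 : ℝ) / (Nat.primeCounting n : ℝ)) < c := by
  have hb := beta_pos
  have hc0 : 0 < c := hb.trans hc
  set ε := (Real.log c - Real.log beta) / 5 with hε
  have hε0 : 0 < ε := by
    have := Real.log_lt_log hb hc
    rw [hε]; linarith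
  obtain ⟨M, hM⟩ := (Tl_tendsto.eventually_lt_const hε0).exists
  have hQ1 : ∀ᶠ n : ℕ in atTop, ∀ Q ∈ PF M,
      (∑ p ∈ bigP n (M + 1), F (hQ M Q) (n / p)) / Nat.primeCounting n < Real.log beta + ε := by
    rw [Filter.eventually_all_finset]
    intro Q hQm
    have hpf : ProductFree (gQ Q) := (mem_filter.1 hQm).2
    have h1 : ∑ m ∈ range M, t (hQ M Q) m = ∑ m ∈ range M, t (gQ Q) m := by
      apply sum_congr rfl
      intro m hm
      rw [mem_range] at hm
      unfold t F
      rw [eOn_hQ (by omega)]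
    have h2 := sum_t_le hpf M
    exact (main_lim (hQ M Q) M).eventually_lt_const (by rw [h1]; linarith)
  have hE := (En_lim M).eventually_lt_const hε0
  have hpc : Tendsto (fun n : ℕ => (Nat.primeCounting n : ℝ)) atTop atTop :=
    tendsto_natCast_atTop_atTop.comp Nat.tendsto_primeCounting
  have hcard := hpc.eventually_gt_atTop (Real.log ((PF M).card + 1) / ε)
  have hBt : Tendsto Bn atTop atTop := by
    apply tendsto_nat_floor_atTop.comp
    exact (tendsto_rpow_atTop (by norm_num)).comp tendsto_natCast_atTop_atTop
  filter_upwards [hQ1, hE, hcard, hBt.eventually_ge_atTop (M + 1), pc_pos, PNT.pi_cheb,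
    eventually_ge_atTop 1] with n h1 h2 h3 h4 h5 h6 hn
  have hB := Bn_pos hn
  have hD1 : 1 ≤ (Bn n) ^ 5 := Nat.one_le_pow _ _ hB
  have hBD : Bn n * Bn n * (Bn n) ^ 5 ≤ n := by
    have := Bn_le_pow hn 7 (by norm_num)
    calc _ = (Bn n) ^ 7 := by ring
      _ ≤ n := this
  have hDD : (Bn n) ^ 5 * (Bn n) ^ 5 ≤ n := by
    have := Bn_le_pow hn 10 (by norm_num)
    calc _ = (Bn n) ^ 10 := by ring
      _ ≤ n := this
  have hMD : M + 1 ≤ (Bn n) ^ 5 := h4.trans (Nat.le_self_pow (by norm_num) _)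
  have hc' : ∀ j : ℕ, 1 ≤ j → j ≤ (Bn n) ^ 5 →
      (Nat.primeCounting (n / j) : ℝ) ≤ 5 * Nat.primeCounting n / j := by
    intro j hj1 hj2
    apply h6 j hj1
    calc j ^ 10 ≤ ((Bn n) ^ 5) ^ 10 := by gcongr
      _ = (Bn n) ^ 50 := by ring
      _ ≤ n := Bn_le_pow hn 50 (by norm_num)
  have hS := Sk_upper M hB hD1 hBD hDD
  change Sk 3 n ≤ (n + 1) ^ (En M n) * _ at hS
  set N : ℝ := (Nat.primeCounting n : ℝ) with hN
  have hterm : ∀ Q ∈ PF M, ((∏ p ∈ bigP n ((Bn n) ^ 5), (eOn (hQ M Q) (n / p) + (n / p) + 1) : ℕ) : ℝ)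
      ≤ Real.exp ((Real.log beta + 2 * ε) * N) := by
    intro Q hQm
    rw [prod_eq_exp]
    apply Real.exp_le_exp.2
    have a1 := tail (hQ M Q) hMD hc'
    have a2 := h1 Q hQm
    rw [div_lt_iff₀ h5] at a2
    have a3 : Tl M * N ≤ ε * N := by gcongr
    linarith
  have hS2 : (Sk 3 n : ℝ) ≤ Real.exp ((Real.log beta + 4 * ε) * N) := by
    have hS' : (Sk 3 n : ℝ) ≤ ((n:ℝ) + 1) ^ (En M n) * ∑ Q ∈ PF M,
      ((∏ p ∈ bigP n ((Bn n) ^ 5), (eOn (hQ M Q) (n / p) + (n / p) + 1) : ℕ) : ℝ) := by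
      exact_mod_cast hS
    refine hS'.trans ?_
    have b1 : ((n:ℝ) + 1) ^ (En M n) ≤ Real.exp (ε * N) := by
      rw [← Real.exp_log (show (0:ℝ) < (n:ℝ) + 1 by positivity), ← Real.exp_nat_mul]
      apply Real.exp_le_exp.2
      rw [div_lt_iff₀ h5] at h2
      exact h2.le
    have b2 : ∑ Q ∈ PF M,
      ((∏ p ∈ bigP n ((Bn n) ^ 5), (eOn (hQ M Q) (n / p) + (n / p) + 1) : ℕ) : ℝ) ≤
        Real.exp (ε * N) * Real.exp ((Real.log beta + 2 * ε) * N) := by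
      refine (sum_le_sum hterm).trans ?_
      rw [sum_const, nsmul_eq_mul]
      gcongr
      rw [div_lt_iff₀ hε0] at h3
      calc ((PF M).card : ℝ) ≤ (PF M).card + 1 := by linarith
        _ = Real.exp (Real.log ((PF M).card + 1)) := by rw [Real.exp_log (by positivity)]
        _ ≤ _ := by
          apply Real.exp_le_exp.2
          linarith
    calc _ ≤ Real.exp (ε * N) * (Real.exp (ε * N) * Real.exp ((Real.log beta + 2 * ε) * N)) := by
          gcongr
      _ = _ := by
          rw [← Real.exp_add, ← Real.exp_add]; congr 1; ring
  calc (Sk 3 n : ℝ) ^ ((1 : ℝ) / N) ≤ Real.exp ((Real.log beta + 4 * ε) * N) ^ ((1 : ℝ) / N) := by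
        apply Real.rpow_le_rpow (by positivity) hS2 (by positivity)
    _ = Real.exp (Real.log beta + 4 * ε) := by
        rw [exp_root h5]; congr 1; field_simp
    _ < Real.exp (Real.log c) := by
        apply Real.exp_lt_exp.2
        rw [hε]; rw [hε] at hε0; linarith
    _ = c := Real.exp_log hc0

end Cnt


end

theorem count_mul3Sidon :
    Filter.Tendsto
      (fun n : ℕ => (Sk 3 n : ℝ) ^ ((1 : ℝ) / (Nat.primeCounting n : ℝ)))
      Filter.atTop (nhds beta) := by
  rw [tendsto_order]
  exact ⟨fun _ h => Cnt.lower h, fun _ h => Cnt.upper h⟩
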